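/- arXiv:math/0702516 — 3 statements merged into one kernel-verified Lean document; each statement's English description precedes it below -/
import Mathlib

section
/- Let q = 2p with p ≥ 2, λ = 2cos(π/q), and 1/2 < α < 1/λ, and let Ω_α be the natural extension region ⋃_{n=1}^{2p−1} J_n × [0,H_n] described below. Then ∫∫_{Ω_α} (1+xy)^{−2} dx dy = log((1 + cos(π/q))/sin(π/q)); equivalently, the normalizing constant of the invariant probability density C_{q,α}/(1+xy)² on Ω_α is C_{q,α} = 1/log((1 + cos(π/q))/sin(π/q)), independent of α. -/
open Set MeasureTheory

/-- The digit function `d(x) = ⌊|1/(xλ)| + 1 - α⌋` of the α-Rosen continued fraction. -/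
noncomputable def dfun (lam α x : ℝ) : ℤ := ⌊|1 / (x * lam)| + 1 - α⌋

/-- The α-Rosen continued fraction map `T_α`. -/
noncomputable def Tmap (lam α x : ℝ) : ℝ :=
  if x = 0 then 0 else |1 / x| - lam * (dfun lam α x : ℝ)

/-- The two-dimensional natural extension map `𝒯_α(x, y) = (T_α(x), 1/(d(x)λ + ε(x)y))`. -/
noncomputable def Tnat (lam α : ℝ) (z : ℝ × ℝ) : ℝ × ℝ :=
  (Tmap lam α z.1, 1 / ((dfun lam α z.1 : ℝ) * lam + Real.sign z.1 * z.2))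

/-!
With `θ = π / q` and `λ = 2 cos θ`, put `D w t = w sin (tθ) - sin ((t - 1)θ)`. On the part of the
orbits that bounds `Ω_α`, the map `T_α` is `x ↦ |1/x| - λ`, which on negative points is linearised
by `D w (t + 1) = λ D w t - D w (t - 1)`: the orbit of `-w` is `-D w (n + 1) / D w n`. Every height
is `H = sin (sθ) / sin ((s + 1)θ)` with `s` an integer or a half-integer, and the addition formulas
give `1 + x_n H = sin θ · D w (n - s) / (D w n · sin ((s + 1)θ))`. A strip `[a, b) × [0, H]` has
mass `log ((1 + bH) / (1 + aH))`, so with `v = (1 - α)λ` and `u = αλ` the strips `J_{2n-1}` and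
`J_{2n}`, `n < p`, have mass `log (D v (n - 1) / D u n)` and `log (D u n / D v n)`. The sum
telescopes, and together with the last strip only `log (cot (θ / 2))` survives.
-/

section Strip

variable {a b x y H : ℝ}

theorem one_add_mul_pos (hH : 0 < 1 + a * H) (hx : a ≤ x) (hy : 0 ≤ y) (hyH : y ≤ H) :
    0 < 1 + x * y := by
  have hxy : a * y ≤ x * y := mul_le_mul_of_nonneg_right hx hy
  rcases le_total 0 a with ha | ha
  · linarith [mul_nonneg ha hy]
  · linarith [mul_le_mul_of_nonpos_left hyH ha]

theorem integrableOn_one_div_one_add_mul_sq (hH : 0 < 1 + a * H) :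
    IntegrableOn (fun z : ℝ × ℝ => 1 / (1 + z.1 * z.2) ^ 2) (Ico a b ×ˢ Icc 0 H) := by
  have hcont : ContinuousOn (fun z : ℝ × ℝ => 1 / (1 + z.1 * z.2) ^ 2) (Icc a b ×ˢ Icc 0 H) :=
    ContinuousOn.div (by fun_prop) (by fun_prop) fun _ hz =>
      (pow_pos (one_add_mul_pos hH hz.1.1 hz.2.1 hz.2.2) 2).ne'
  exact (hcont.integrableOn_compact (isCompact_Icc.prod isCompact_Icc)).mono_set
    (prod_mono Ico_subset_Icc_self le_rfl)

theorem integral_one_div_one_add_mul_sq (hH0 : 0 ≤ H) (hH : 0 < 1 + x * H) :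
    ∫ y in 0..H, 1 / (1 + x * y) ^ 2 = H / (1 + x * H) := by
  have hpos : ∀ y ∈ uIcc 0 H, 0 < 1 + x * y := fun y hy => by
    rw [uIcc_of_le hH0] at hy
    exact one_add_mul_pos hH le_rfl hy.1 hy.2
  have hderiv : ∀ y ∈ uIcc 0 H,
      HasDerivAt (fun y => y / (1 + x * y)) (1 / (1 + x * y) ^ 2) y := fun y hy => by
    refine ((hasDerivAt_id y).div (((hasDerivAt_id y).const_mul x).const_add 1)
      (hpos y hy).ne').congr_deriv ?_
    simp only [id]
    ring
  rw [intervalIntegral.integral_eq_sub_of_hasDerivAt hderiv]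
  · simp
  · exact (ContinuousOn.div (by fun_prop) (by fun_prop) fun y hy =>
      (pow_pos (hpos y hy) 2).ne').intervalIntegrable

theorem integral_div_one_add_mul (hab : a ≤ b) (hH0 : 0 ≤ H) (hH : 0 < 1 + a * H) :
    ∫ x in a..b, H / (1 + x * H) = Real.log ((1 + b * H) / (1 + a * H)) := by
  have hpos : ∀ x ∈ uIcc a b, 0 < 1 + x * H := fun x hx => by
    rw [uIcc_of_le hab] at hx
    exact one_add_mul_pos hH hx.1 hH0 le_rfl
  have hderiv : ∀ x ∈ uIcc a b,
      HasDerivAt (fun x => Real.log (1 + x * H)) (H / (1 + x * H)) x := fun x hx => by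
    simpa using (((hasDerivAt_id x).mul_const H).const_add 1).log (hpos x hx).ne'
  rw [intervalIntegral.integral_eq_sub_of_hasDerivAt hderiv,
    Real.log_div (hpos b right_mem_uIcc).ne' hH.ne']
  exact (ContinuousOn.div (by fun_prop) (by fun_prop) fun x hx =>
    (hpos x hx).ne').intervalIntegrable

theorem setIntegral_strip (hab : a ≤ b) (hH0 : 0 ≤ H) (hH : 0 < 1 + a * H) :
    ∫ z in Ico a b ×ˢ Icc 0 H, 1 / (1 + z.1 * z.2) ^ 2 =
      Real.log ((1 + b * H) / (1 + a * H)) := by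
  have hint := integrableOn_one_div_one_add_mul_sq (b := b) hH
  rw [Measure.volume_eq_prod] at hint ⊢
  have hinner : ∀ x ∈ Ico a b, ∫ y in Icc 0 H, 1 / (1 + x * y) ^ 2 = H / (1 + x * H) :=
    fun x hx => by
      rw [integral_Icc_eq_integral_Ioc, ← intervalIntegral.integral_of_le hH0,
        integral_one_div_one_add_mul_sq hH0 (one_add_mul_pos hH hx.1 hH0 le_rfl)]
  rw [setIntegral_prod _ hint, setIntegral_congr_fun measurableSet_Ico hinner,
    integral_Ico_eq_integral_Ioo, ← integral_Ioc_eq_integral_Ioo,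
    ← intervalIntegral.integral_of_le hab, integral_div_one_add_mul hab hH0 hH]

end Strip

theorem pairwiseDisjoint_Ico_of_monotoneOn {β : Type*} [Preorder β] {a : ℕ → β} {N : ℕ}
    (ha : MonotoneOn a (Iic N)) :
    (Iio N).PairwiseDisjoint fun n => Ico (a n) (a (n + 1)) := by
  have hlt : ∀ m n, m < n → n < N → Disjoint (Ico (a m) (a (m + 1))) (Ico (a n) (a (n + 1))) :=
    fun m n hmn hn => disjoint_left.2 fun x hm hx =>
      (hm.2.trans_le ((ha (by simp; omega) (by simp; omega) hmn).trans hx.1)).false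
  intro m hm n hn hne
  rcases hne.lt_or_gt with h | h
  · exact hlt m n h hn
  · exact (hlt n m h hm).symm

section Denominator

open Real

/-- The solution `D` of `D (t + 1) = 2 cos θ * D t - D (t - 1)` with `D 0 = sin θ` and
`D 1 = w sin θ`; it linearises the iteration of `x ↦ -1 / x - 2 cos θ` started at `-w`.
The argument is real because the odd-indexed heights require half-integer values. -/
noncomputable def rosenDenom (θ w t : ℝ) : ℝ := w * sin (t * θ) - sin ((t - 1) * θ)

/-- The closed form `-D (t + 1) / D t` of the point reached from `-w` after `t` iterations of
`x ↦ -1 / x - 2 cos θ`. -/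
noncomputable def rosenOrbit (θ w t : ℝ) : ℝ := -(rosenDenom θ w (t + 1) / rosenDenom θ w t)

/-- The heights of the natural extension: `H_{2n}` is the value at `n`, and `H_{2n-1}` is the value
at `n - 1/2`. -/
noncomputable def rosenHeight (θ s : ℝ) : ℝ := sin (s * θ) / sin ((s + 1) * θ)

variable {θ u v w s t : ℝ}

theorem sin_add_one_mul (θ t : ℝ) :
    sin ((t + 1) * θ) = 2 * cos θ * sin (t * θ) - sin ((t - 1) * θ) := by
  rw [add_mul, sub_mul, one_mul, sin_add, sin_sub]
  ring

theorem rosenDenom_zero (θ w : ℝ) : rosenDenom θ w 0 = sin θ := by simp [rosenDenom]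

theorem rosenDenom_one (θ w : ℝ) : rosenDenom θ w 1 = w * sin θ := by simp [rosenDenom]

theorem rosenDenom_half (θ w : ℝ) : rosenDenom θ w (1 / 2) = sin (θ / 2) * (1 + w) := by
  rw [rosenDenom, show (1 / 2 - 1) * θ = -(θ / 2) by ring, show 1 / 2 * θ = θ / 2 by ring, sin_neg]
  ring

theorem rosenDenom_add_one (θ w t : ℝ) :
    rosenDenom θ w (t + 1) = 2 * cos θ * rosenDenom θ w t - rosenDenom θ w (t - 1) := by
  have h := sin_add_one_mul θ (t - 1)
  rw [sub_add_cancel] at h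
  simp only [rosenDenom, sin_add_one_mul θ t, add_sub_cancel_right]
  linear_combination -h

theorem rosenDenom_neg_half (θ w : ℝ) :
    rosenDenom θ w (-(1 / 2)) = sin (θ / 2) * (1 + 2 * cos θ - w) := by
  have h := sin_add_one_mul θ (1 / 2)
  rw [show (1 / 2 - 1) * θ = -(θ / 2) by ring, show 1 / 2 * θ = θ / 2 by ring, sin_neg] at h
  rw [rosenDenom, show (-(1 / 2) - 1) * θ = -((1 / 2 + 1) * θ) by ring,
    show -(1 / 2) * θ = -(θ / 2) by ring, sin_neg, sin_neg, h]
  ring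

theorem rosenDenom_mul_sin_sub (θ w s t : ℝ) :
    rosenDenom θ w t * sin ((s + 1) * θ) - rosenDenom θ w (t + 1) * sin (s * θ) =
      sin θ * rosenDenom θ w (t - s) := by
  have hcasorati : ∀ a b : ℝ, sin (a * θ) * sin ((b + 1) * θ) - sin ((a + 1) * θ) * sin (b * θ) =
      sin θ * sin ((a - b) * θ) := fun a b => by
    simp only [add_mul, sub_mul, one_mul, sin_add, sin_sub]
    ring
  have h₁ := hcasorati t s
  have h₂ := hcasorati (t - 1) s
  rw [sub_add_cancel, sub_right_comm] at h₂
  simp only [rosenDenom, add_sub_cancel_right]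
  linear_combination w * h₁ - h₂

theorem rosenDenom_mul_rosenDenom_sub (θ u v s t : ℝ) :
    rosenDenom θ u s * rosenDenom θ v (t + 1) - rosenDenom θ u (s + 1) * rosenDenom θ v t =
      sin θ * (v * rosenDenom θ u (s - t) - rosenDenom θ u (s - t + 1)) := by
  have h₁ := rosenDenom_mul_sin_sub θ u t s
  have h₂ := rosenDenom_mul_sin_sub θ u (t - 1) s
  rw [sub_add_cancel, ← sub_add] at h₂
  have hv₀ : rosenDenom θ v t = v * sin (t * θ) - sin ((t - 1) * θ) := rfl
  have hv₁ : rosenDenom θ v (t + 1) = v * sin ((t + 1) * θ) - sin (t * θ) := by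
    rw [rosenDenom, add_sub_cancel_right]
  rw [hv₀, hv₁]
  linear_combination v * h₁ - h₂

theorem rosenDenom_pos (hθ : 0 < θ) (ht : 0 ≤ t) (htθ : (t + 1) * θ ≤ π / 2)
    (hw : 2 * cos θ - 1 ≤ w) : 0 < rosenDenom θ w t := by
  have htθ₀ : 0 ≤ t * θ := by positivity
  have hsin : 0 ≤ sin (t * θ) := sin_nonneg_of_nonneg_of_le_pi htθ₀ (by linarith [pi_pos])
  have hsin_lt : sin (t * θ) < sin ((t + 1) * θ) :=
    sin_lt_sin_of_lt_of_le_pi_div_two (by linarith [pi_pos]) htθ (by linarith)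
  have hdenom : rosenDenom θ w t =
      sin ((t + 1) * θ) - sin (t * θ) + (w - (2 * cos θ - 1)) * sin (t * θ) := by
    rw [rosenDenom, sin_add_one_mul]
    ring
  have := mul_nonneg (sub_nonneg.2 hw) hsin
  linarith

theorem rosenOrbit_zero (hθ : sin θ ≠ 0) (w : ℝ) : rosenOrbit θ w 0 = -w := by
  rw [rosenOrbit, zero_add, rosenDenom_one, rosenDenom_zero, mul_div_cancel_right₀ _ hθ]

theorem rosenOrbit_neg (h₀ : 0 < rosenDenom θ w t) (h₁ : 0 < rosenDenom θ w (t + 1)) :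
    rosenOrbit θ w t < 0 :=
  neg_neg_of_pos (div_pos h₁ h₀)

theorem rosenOrbit_add_one (h : rosenDenom θ w (t + 1) ≠ 0) :
    rosenOrbit θ w (t + 1) = -(1 / rosenOrbit θ w t) - 2 * cos θ := by
  rw [rosenOrbit, rosenOrbit, rosenDenom_add_one θ w (t + 1), add_sub_cancel_right]
  field_simp
  ring

theorem rosenOrbit_le_rosenOrbit (hvu : v ≤ u) (hu : 0 < rosenDenom θ u t)
    (hv : 0 < rosenDenom θ v t) : rosenOrbit θ u t ≤ rosenOrbit θ v t := by
  have h := rosenDenom_mul_rosenDenom_sub θ u v t t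
  rw [sub_self, zero_add, rosenDenom_zero, rosenDenom_one] at h
  rw [rosenOrbit, rosenOrbit, neg_le_neg_iff, div_le_div_iff₀ hv hu]
  nlinarith [mul_nonneg (sub_nonneg.2 hvu) (sq_nonneg (sin θ))]

theorem rosenOrbit_le_rosenOrbit_add_one (huv : u * (2 * cos θ - v) ≤ 1)
    (hu : 0 < rosenDenom θ u (t + 1)) (hv : 0 < rosenDenom θ v t) :
    rosenOrbit θ v t ≤ rosenOrbit θ u (t + 1) := by
  have h := rosenDenom_mul_rosenDenom_sub θ u v (t + 1) t
  rw [add_sub_cancel_left, rosenDenom_add_one θ u 1, sub_self, rosenDenom_one,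
    rosenDenom_zero] at h
  rw [rosenOrbit, rosenOrbit, neg_le_neg_iff, div_le_div_iff₀ hu hv]
  nlinarith [mul_nonneg (sub_nonneg.2 huv) (sq_nonneg (sin θ))]

theorem one_add_rosenOrbit_mul_rosenHeight (ht : rosenDenom θ w t ≠ 0)
    (hs : sin ((s + 1) * θ) ≠ 0) :
    1 + rosenOrbit θ w t * rosenHeight θ s =
      sin θ * rosenDenom θ w (t - s) / (rosenDenom θ w t * sin ((s + 1) * θ)) := by
  rw [← rosenDenom_mul_sin_sub, rosenOrbit, rosenHeight, neg_mul, ← sub_eq_add_neg,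
    div_mul_div_comm, one_sub_div (mul_ne_zero ht hs)]

theorem cos_sub_cos_div_eq_rosenHeight (hθ : sin (θ / 2) ≠ 0) (t : ℝ) :
    (cos (t * θ) - cos ((t - 1) * θ)) / (cos ((t + 1) * θ) - cos (t * θ)) =
      rosenHeight θ (t - 1 / 2) := by
  rw [cos_sub_cos, cos_sub_cos, rosenHeight,
    show (t * θ + (t - 1) * θ) / 2 = (t - 1 / 2) * θ by ring,
    show (t * θ - (t - 1) * θ) / 2 = θ / 2 by ring,
    show ((t + 1) * θ + t * θ) / 2 = (t - 1 / 2 + 1) * θ by ring,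
    show ((t + 1) * θ - t * θ) / 2 = θ / 2 by ring,
    mul_div_mul_right _ _ hθ, mul_div_mul_left _ _ (by norm_num)]

theorem cos_half_div_sin_half (θ : ℝ) :
    cos (θ / 2) / sin (θ / 2) = (1 + cos θ) / sin θ := by
  obtain ⟨φ, rfl⟩ : ∃ φ, θ = 2 * φ := ⟨θ / 2, by ring⟩
  rw [mul_div_cancel_left₀ φ two_ne_zero, cos_two_mul, sin_two_mul, add_sub_cancel]
  rcases eq_or_ne (cos φ) 0 with h | h
  · simp [h]
  · field_simp

end Denominator

/-- The parameters of the even case: `q = 2 (N + 1)` and `θ = π / q`, while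
`v = (1 - α)λ` and `u = αλ` are the absolute values of the endpoints `ℓ₀` and `r₀`. -/
structure IsRosenPair (N : ℕ) (θ v u : ℝ) : Prop where
  pos : 0 < N
  angle : (N + 1) * θ = Real.pi / 2
  add : v + u = 2 * Real.cos θ
  le : v ≤ u
  lt_one : u < 1

/-- The union `J_{2n+1} × [0, H_{2n+1}] ∪ J_{2n+2} × [0, H_{2n+2}]` of two consecutive strips of the
natural extension, for parameters as in `IsRosenPair`. -/
noncomputable def rosenCell (θ v u : ℝ) (n : ℕ) : Set (ℝ × ℝ) :=
  Ico (rosenOrbit θ v n) (rosenOrbit θ u (n + 1)) ×ˢ Icc 0 (rosenHeight θ (n + 1 / 2)) ∪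
    Ico (rosenOrbit θ u (n + 1)) (rosenOrbit θ v (n + 1)) ×ˢ Icc 0 (rosenHeight θ (n + 1))

/-- The natural extension region `Ω_α` in closed form: `N` cells and the last strip. -/
noncomputable def rosenRegion (N : ℕ) (θ v u : ℝ) : Set (ℝ × ℝ) :=
  (⋃ n ∈ Finset.range N, rosenCell θ v u n) ∪
    Ico (rosenOrbit θ v N) u ×ˢ Icc 0 (rosenHeight θ (N + 1 / 2))

theorem rosenRegion_eq_biUnion_Icc {N : ℕ} {θ v u : ℝ} {ℓ r Hodd Heven : ℕ → ℝ}
    (hℓ : ∀ n ≤ N, ℓ n = rosenOrbit θ v n) (hr₀ : r 0 = u)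
    (hr : ∀ n < N, r (n + 1) = rosenOrbit θ u (n + 1))
    (hodd : ∀ n : ℕ, Hodd (n + 1) = rosenHeight θ (n + 1 / 2))
    (heven : ∀ n : ℕ, Heven (n + 1) = rosenHeight θ (n + 1)) :
    rosenRegion N θ v u =
      (⋃ n ∈ Finset.Icc 1 N, Ico (ℓ (n - 1)) (r n) ×ˢ Icc 0 (Hodd n)) ∪
        (⋃ n ∈ Finset.Icc 1 N, Ico (r n) (ℓ n) ×ˢ Icc 0 (Heven n)) ∪
        Ico (ℓ N) (r 0) ×ˢ Icc 0 (Hodd (N + 1)) := by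
  have hIcc : Finset.Icc 1 N = (Finset.range N).image (· + 1) := by
    ext n
    simp only [Finset.mem_Icc, Finset.mem_image, Finset.mem_range]
    exact ⟨fun h => ⟨n - 1, by omega, by omega⟩, by rintro ⟨k, hk, rfl⟩; omega⟩
  rw [hIcc, Finset.set_biUnion_finset_image, Finset.set_biUnion_finset_image, rosenRegion,
    hℓ N le_rfl, hr₀, hodd]
  simp only [← iUnion_union_distrib]
  congr 1
  refine iUnion₂_congr fun n hn => ?_
  have hn := Finset.mem_range.1 hn
  rw [rosenCell, add_tsub_cancel_right, hℓ n hn.le, hℓ (n + 1) hn, hr n hn, hodd, heven,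
    Nat.cast_add_one]

namespace IsRosenPair

open Real

variable {N n : ℕ} {θ v u : ℝ}

theorem theta_pos (h : IsRosenPair N θ v u) : 0 < θ :=
  pos_of_mul_pos_right (h.angle ▸ pi_div_two_pos) (by positivity)

theorem theta_lt (h : IsRosenPair N θ v u) : θ < π / 2 := by
  have hN : (1 : ℝ) ≤ N := mod_cast h.pos
  nlinarith [h.angle, h.theta_pos]

theorem sin_pos (h : IsRosenPair N θ v u) : 0 < sin θ :=
  sin_pos_of_pos_of_lt_pi h.theta_pos (by linarith [h.theta_lt, pi_pos])

theorem cos_pos (h : IsRosenPair N θ v u) : 0 < cos θ :=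
  cos_pos_of_mem_Ioo ⟨by linarith [h.theta_pos, pi_pos], h.theta_lt⟩

theorem sin_half_pos (h : IsRosenPair N θ v u) : 0 < sin (θ / 2) :=
  sin_pos_of_pos_of_lt_pi (by linarith [h.theta_pos]) (by linarith [h.theta_lt, pi_pos])

theorem cos_half_pos (h : IsRosenPair N θ v u) : 0 < cos (θ / 2) :=
  cos_pos_of_mem_Ioo ⟨by linarith [h.theta_pos, pi_pos], by linarith [h.theta_lt, pi_pos]⟩

theorem right_pos (h : IsRosenPair N θ v u) : 0 < u := by
  linarith [h.add, h.le, h.cos_pos]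

theorem add_one_mul_le (h : IsRosenPair N θ v u) (hn : n ≤ N) : (n + 1) * θ ≤ π / 2 := by
  rw [← h.angle]
  have := h.theta_pos
  gcongr

theorem rosenDenom_right_pos (h : IsRosenPair N θ v u) (hn : n ≤ N) : 0 < rosenDenom θ u n :=
  rosenDenom_pos h.theta_pos n.cast_nonneg (h.add_one_mul_le hn)
    (by linarith [h.add, h.le, h.lt_one])

theorem rosenDenom_left_pos (h : IsRosenPair N θ v u) (hn : n ≤ N) : 0 < rosenDenom θ v n :=
  rosenDenom_pos h.theta_pos n.cast_nonneg (h.add_one_mul_le hn)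
    (by linarith [h.add, h.lt_one])

theorem rosenDenom_right_succ_pos (h : IsRosenPair N θ v u) (hn : n < N) :
    0 < rosenDenom θ u (n + 1) :=
  mod_cast h.rosenDenom_right_pos (Nat.succ_le_of_lt hn)

theorem rosenDenom_left_succ_pos (h : IsRosenPair N θ v u) (hn : n < N) :
    0 < rosenDenom θ v (n + 1) :=
  mod_cast h.rosenDenom_left_pos (Nat.succ_le_of_lt hn)

theorem rosenOrbit_left_le_right_succ (h : IsRosenPair N θ v u) (hn : n < N) :
    rosenOrbit θ v n ≤ rosenOrbit θ u (n + 1) := by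
  refine rosenOrbit_le_rosenOrbit_add_one ?_ (h.rosenDenom_right_succ_pos hn)
    (h.rosenDenom_left_pos hn.le)
  rw [← h.add, add_sub_cancel_left]
  nlinarith [h.right_pos, h.lt_one]

theorem rosenOrbit_right_succ_le_left_succ (h : IsRosenPair N θ v u) (hn : n < N) :
    rosenOrbit θ u (n + 1) ≤ rosenOrbit θ v (n + 1) :=
  rosenOrbit_le_rosenOrbit h.le (h.rosenDenom_right_succ_pos hn) (h.rosenDenom_left_succ_pos hn)

theorem monotoneOn_rosenOrbit (h : IsRosenPair N θ v u) :
    MonotoneOn (fun n : ℕ => rosenOrbit θ v n) (Iic N) := by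
  refine monotoneOn_of_le_add_one ordConnected_Iic fun n _ _ hn => ?_
  push_cast
  exact (h.rosenOrbit_left_le_right_succ hn).trans (h.rosenOrbit_right_succ_le_left_succ hn)

theorem rosenOrbit_last_lt (h : IsRosenPair N θ v u) : rosenOrbit θ v N < u := by
  have hpos := h.rosenDenom_left_pos le_rfl
  have hN : (N : ℝ) * θ = π / 2 - θ := by linarith [h.angle]
  have hlast : rosenDenom θ v (N + 1) = v - cos θ := by
    rw [rosenDenom, add_sub_cancel_right, h.angle, hN, sin_pi_div_two, sin_pi_div_two_sub, mul_one]
  have hN' : rosenDenom θ v N = v * cos θ - (2 * cos θ ^ 2 - 1) := by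
    rw [rosenDenom, sub_mul, hN, show π / 2 - θ - 1 * θ = π / 2 - 2 * θ by ring,
      sin_pi_div_two_sub, sin_pi_div_two_sub, cos_two_mul]
  have hkey : u * rosenDenom θ v N + rosenDenom θ v (N + 1) = cos θ * (1 - u ^ 2) := by
    rw [hlast, hN', show v = 2 * cos θ - u by linarith [h.add]]
    ring
  have hu : 0 < 1 - u ^ 2 := by nlinarith [h.right_pos, h.lt_one]
  rw [rosenOrbit, ← neg_div, div_lt_iff₀ hpos]
  linarith [mul_pos h.cos_pos hu]

theorem rosenOrbit_left_mem (h : IsRosenPair N θ v u) (hn : n ≤ N) :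
    rosenOrbit θ v n ∈ Ico (-v) u := by
  constructor
  · rw [← rosenOrbit_zero h.sin_pos.ne' v]
    simpa using h.monotoneOn_rosenOrbit (mem_Iic.2 N.zero_le) hn n.zero_le
  · exact (h.monotoneOn_rosenOrbit hn self_mem_Iic hn).trans_lt h.rosenOrbit_last_lt

theorem rosenOrbit_right_succ_mem (h : IsRosenPair N θ v u) (hn : n < N) :
    rosenOrbit θ u (n + 1) ∈ Ico (-v) u := by
  have hsucc := (h.rosenOrbit_left_mem (Nat.succ_le_of_lt hn)).2
  push_cast at hsucc
  exact ⟨(h.rosenOrbit_left_mem hn.le).1.trans (h.rosenOrbit_left_le_right_succ hn),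
    (h.rosenOrbit_right_succ_le_left_succ hn).trans_lt hsucc⟩

theorem sin_add_one_mul_pos (h : IsRosenPair N θ v u) {s : ℝ} (hs : 0 ≤ s) (hsN : s ≤ N + 1) :
    0 < sin ((s + 1) * θ) := by
  have := h.theta_pos
  refine sin_pos_of_pos_of_lt_pi (by positivity) ?_
  nlinarith [h.angle, h.theta_lt]

theorem rosenHeight_nonneg (h : IsRosenPair N θ v u) {s : ℝ} (hs : 0 ≤ s) (hsN : s ≤ N + 1) :
    0 ≤ rosenHeight θ s := by
  have hsθ : s * θ ≤ π := by nlinarith [h.angle, h.theta_pos, pi_pos]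
  exact div_nonneg (sin_nonneg_of_nonneg_of_le_pi (mul_nonneg hs h.theta_pos.le) hsθ)
    (h.sin_add_one_mul_pos hs hsN).le

theorem one_add_rosenOrbit_left_mul_rosenHeight_add_half (h : IsRosenPair N θ v u) (hn : n ≤ N) :
    1 + rosenOrbit θ v n * rosenHeight θ (n + 1 / 2) =
      sin θ * (sin (θ / 2) * (1 + u)) / (rosenDenom θ v n * sin ((n + 1 / 2 + 1) * θ)) := by
  have hnN : (n : ℝ) ≤ N := mod_cast hn
  rw [one_add_rosenOrbit_mul_rosenHeight (h.rosenDenom_left_pos hn).ne'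
      (h.sin_add_one_mul_pos (by positivity) (by linarith)).ne',
    sub_add_cancel_left, rosenDenom_neg_half, ← h.add, add_left_comm, add_sub_cancel_left]

theorem one_add_rosenOrbit_right_mul_rosenHeight_add_half (h : IsRosenPair N θ v u) (hn : n < N) :
    1 + rosenOrbit θ u (n + 1) * rosenHeight θ (n + 1 / 2) =
      sin θ * (sin (θ / 2) * (1 + u)) / (rosenDenom θ u (n + 1) * sin ((n + 1 / 2 + 1) * θ)) := by
  have hnN : (n : ℝ) ≤ N := mod_cast hn.le
  rw [one_add_rosenOrbit_mul_rosenHeight (h.rosenDenom_right_succ_pos hn).ne'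
      (h.sin_add_one_mul_pos (by positivity) (by linarith)).ne',
    add_sub_add_left_eq_sub, show (1 : ℝ) - 1 / 2 = 1 / 2 by norm_num, rosenDenom_half]

theorem one_add_rosenOrbit_mul_rosenHeight_self (h : IsRosenPair N θ v u) (hn : n < N) {w : ℝ}
    (hw : rosenDenom θ w (n + 1) ≠ 0) :
    1 + rosenOrbit θ w (n + 1) * rosenHeight θ (n + 1) =
      sin θ * sin θ / (rosenDenom θ w (n + 1) * sin ((n + 1 + 1) * θ)) := by
  have hnN : (n : ℝ) ≤ N := mod_cast hn.le
  rw [one_add_rosenOrbit_mul_rosenHeight hw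
      (h.sin_add_one_mul_pos (by positivity) (by linarith)).ne', sub_self, rosenDenom_zero]

theorem one_add_rosenOrbit_left_mul_rosenHeight_add_half_pos (h : IsRosenPair N θ v u)
    (hn : n ≤ N) : 0 < 1 + rosenOrbit θ v n * rosenHeight θ (n + 1 / 2) := by
  have hnN : (n : ℝ) ≤ N := mod_cast hn
  rw [h.one_add_rosenOrbit_left_mul_rosenHeight_add_half hn]
  have := h.sin_pos
  have := h.sin_half_pos
  have := h.right_pos
  have := h.rosenDenom_left_pos hn
  have := h.sin_add_one_mul_pos (s := n + 1 / 2) (by positivity) (by linarith)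
  positivity

theorem one_add_rosenOrbit_right_mul_rosenHeight_pos (h : IsRosenPair N θ v u) (hn : n < N) :
    0 < 1 + rosenOrbit θ u (n + 1) * rosenHeight θ (n + 1) := by
  have hnN : (n : ℝ) ≤ N := mod_cast hn.le
  have hD := h.rosenDenom_right_succ_pos hn
  rw [h.one_add_rosenOrbit_mul_rosenHeight_self hn hD.ne']
  have := h.sin_pos
  have := h.sin_add_one_mul_pos (s := n + 1) (by positivity) (by linarith)
  positivity

theorem setIntegral_odd_strip (h : IsRosenPair N θ v u) (hn : n < N) :
    ∫ z in Ico (rosenOrbit θ v n) (rosenOrbit θ u (n + 1)) ×ˢ Icc 0 (rosenHeight θ (n + 1 / 2)),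
      1 / (1 + z.1 * z.2) ^ 2 = log (rosenDenom θ v n / rosenDenom θ u (n + 1)) := by
  have hnN : (n : ℝ) ≤ N := mod_cast hn.le
  rw [setIntegral_strip (h.rosenOrbit_left_le_right_succ hn)
    (h.rosenHeight_nonneg (by positivity) (by linarith))
    (h.one_add_rosenOrbit_left_mul_rosenHeight_add_half_pos hn.le),
    h.one_add_rosenOrbit_left_mul_rosenHeight_add_half hn.le,
    h.one_add_rosenOrbit_right_mul_rosenHeight_add_half hn]
  have hnum : 0 < sin θ * (sin (θ / 2) * (1 + u)) :=
    mul_pos h.sin_pos (mul_pos h.sin_half_pos (by linarith [h.right_pos]))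
  rw [div_div_div_cancel_left' _ _ hnum.ne', mul_div_mul_right _ _
    (h.sin_add_one_mul_pos (by positivity) (by linarith)).ne']

theorem setIntegral_even_strip (h : IsRosenPair N θ v u) (hn : n < N) :
    ∫ z in Ico (rosenOrbit θ u (n + 1)) (rosenOrbit θ v (n + 1)) ×ˢ Icc 0 (rosenHeight θ (n + 1)),
      1 / (1 + z.1 * z.2) ^ 2 = log (rosenDenom θ u (n + 1) / rosenDenom θ v (n + 1)) := by
  have hnN : (n : ℝ) ≤ N := mod_cast hn.le
  have hu := h.rosenDenom_right_succ_pos hn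
  have hv := h.rosenDenom_left_succ_pos hn
  rw [setIntegral_strip (h.rosenOrbit_right_succ_le_left_succ hn)
    (h.rosenHeight_nonneg (by positivity) (by linarith))
    (h.one_add_rosenOrbit_right_mul_rosenHeight_pos hn),
    h.one_add_rosenOrbit_mul_rosenHeight_self hn hu.ne',
    h.one_add_rosenOrbit_mul_rosenHeight_self hn hv.ne']
  rw [div_div_div_cancel_left' _ _ (mul_pos h.sin_pos h.sin_pos).ne', mul_div_mul_right _ _
    (h.sin_add_one_mul_pos (by positivity) (by linarith)).ne']

theorem sin_last_add_half_mul (h : IsRosenPair N θ v u) :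
    sin ((N + 1 / 2 + 1) * θ) = cos (θ / 2) := by
  rw [show ((N : ℝ) + 1 / 2 + 1) * θ = θ / 2 + π / 2 by linarith [h.angle], sin_add_pi_div_two]

theorem rosenHeight_last (h : IsRosenPair N θ v u) : rosenHeight θ (N + 1 / 2) = 1 := by
  rw [rosenHeight, h.sin_last_add_half_mul,
    show ((N : ℝ) + 1 / 2) * θ = π / 2 - θ / 2 by linarith [h.angle], sin_pi_div_two_sub,
    div_self h.cos_half_pos.ne']

theorem setIntegral_last_strip (h : IsRosenPair N θ v u) :
    ∫ z in Ico (rosenOrbit θ v N) u ×ˢ Icc 0 (rosenHeight θ (N + 1 / 2)),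
      1 / (1 + z.1 * z.2) ^ 2 =
      log (rosenDenom θ v N / sin θ) + log (cos (θ / 2) / sin (θ / 2)) := by
  have hD := h.rosenDenom_left_pos le_rfl
  have hsin := h.sin_pos
  have hsin_half := h.sin_half_pos
  have hcos_half := h.cos_half_pos
  have hu := h.right_pos
  have hquot : (1 + u) / (sin θ * (sin (θ / 2) * (1 + u)) / (rosenDenom θ v N * cos (θ / 2))) =
      rosenDenom θ v N / sin θ * (cos (θ / 2) / sin (θ / 2)) := by
    field_simp
  rw [setIntegral_strip h.rosenOrbit_last_lt.le (zero_le_one.trans_eq h.rosenHeight_last.symm)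
    (h.one_add_rosenOrbit_left_mul_rosenHeight_add_half_pos le_rfl),
    h.one_add_rosenOrbit_left_mul_rosenHeight_add_half le_rfl, h.sin_last_add_half_mul,
    h.rosenHeight_last, mul_one, hquot, log_mul (by positivity) (by positivity)]

theorem integrableOn_rosenCell (h : IsRosenPair N θ v u) (hn : n < N) :
    IntegrableOn (fun z : ℝ × ℝ => 1 / (1 + z.1 * z.2) ^ 2) (rosenCell θ v u n) :=
  (integrableOn_one_div_one_add_mul_sq
      (h.one_add_rosenOrbit_left_mul_rosenHeight_add_half_pos hn.le)).union
    (integrableOn_one_div_one_add_mul_sq (h.one_add_rosenOrbit_right_mul_rosenHeight_pos hn))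

theorem setIntegral_rosenCell (h : IsRosenPair N θ v u) (hn : n < N) :
    ∫ z in rosenCell θ v u n, 1 / (1 + z.1 * z.2) ^ 2 =
      log (rosenDenom θ v n) - log (rosenDenom θ v (n + 1)) := by
  have hu := h.rosenDenom_right_succ_pos hn
  rw [rosenCell, setIntegral_union
      (disjoint_left.2 fun z hz hz' => (hz.1.2.trans_le hz'.1.1).false)
      (measurableSet_Ico.prod measurableSet_Icc)
      (integrableOn_one_div_one_add_mul_sq
        (h.one_add_rosenOrbit_left_mul_rosenHeight_add_half_pos hn.le))
      (integrableOn_one_div_one_add_mul_sq (h.one_add_rosenOrbit_right_mul_rosenHeight_pos hn)),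
    h.setIntegral_odd_strip hn, h.setIntegral_even_strip hn,
    log_div (h.rosenDenom_left_pos hn.le).ne' hu.ne',
    log_div hu.ne' (h.rosenDenom_left_succ_pos hn).ne', sub_add_sub_cancel]

theorem rosenCell_subset (h : IsRosenPair N θ v u) (hn : n < N) :
    rosenCell θ v u n ⊆ Prod.fst ⁻¹' Ico (rosenOrbit θ v n) (rosenOrbit θ v (n + 1 : ℕ)) := by
  push_cast
  rintro z (hz | hz)
  · exact ⟨hz.1.1, hz.1.2.trans_le (h.rosenOrbit_right_succ_le_left_succ hn)⟩
  · exact ⟨(h.rosenOrbit_left_le_right_succ hn).trans hz.1.1, hz.1.2⟩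

theorem pairwiseDisjoint_rosenCell (h : IsRosenPair N θ v u) :
    (Iio N).PairwiseDisjoint (rosenCell θ v u) := fun _ hm _ hn hne =>
  ((pairwiseDisjoint_Ico_of_monotoneOn h.monotoneOn_rosenOrbit hm hn hne).preimage Prod.fst).mono
    (h.rosenCell_subset hm) (h.rosenCell_subset hn)

theorem disjoint_rosenCell_last_strip (h : IsRosenPair N θ v u) (hn : n < N) (s : Set ℝ) :
    Disjoint (rosenCell θ v u n) (Ico (rosenOrbit θ v N) u ×ˢ s) :=
  disjoint_left.2 fun _ hz hz' =>
    ((h.rosenCell_subset hn hz).2.trans_le <|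
      (h.monotoneOn_rosenOrbit hn self_mem_Iic hn).trans hz'.1.1).false

theorem setIntegral_rosenRegion (h : IsRosenPair N θ v u) :
    ∫ z in rosenRegion N θ v u, 1 / (1 + z.1 * z.2) ^ 2 = log ((1 + cos θ) / sin θ) := by
  have hint : ∀ n ∈ Finset.range N, IntegrableOn (fun z : ℝ × ℝ => 1 / (1 + z.1 * z.2) ^ 2)
      (rosenCell θ v u n) := fun n hn => h.integrableOn_rosenCell (Finset.mem_range.1 hn)
  have hcells : ∫ z in ⋃ n ∈ Finset.range N, rosenCell θ v u n, 1 / (1 + z.1 * z.2) ^ 2 =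
      log (sin θ) - log (rosenDenom θ v N) := calc
    _ = ∑ n ∈ Finset.range N, ∫ z in rosenCell θ v u n, 1 / (1 + z.1 * z.2) ^ 2 :=
      integral_biUnion_finset _
        (fun _ _ => (measurableSet_Ico.prod measurableSet_Icc).union
          (measurableSet_Ico.prod measurableSet_Icc))
        (by rw [Finset.coe_range]; exact h.pairwiseDisjoint_rosenCell) hint
    _ = ∑ n ∈ Finset.range N,
          (log (rosenDenom θ v n) - log (rosenDenom θ v (n + 1 : ℕ))) :=
      Finset.sum_congr rfl fun n hn => by
        push_cast
        exact h.setIntegral_rosenCell (Finset.mem_range.1 hn)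
    _ = log (sin θ) - log (rosenDenom θ v N) := by
      rw [Finset.sum_range_sub' fun n : ℕ => log (rosenDenom θ v n), Nat.cast_zero, rosenDenom_zero]
  rw [rosenRegion, setIntegral_union
      (disjoint_iUnion₂_left.2 fun n hn =>
        h.disjoint_rosenCell_last_strip (Finset.mem_range.1 hn) _)
      (measurableSet_Ico.prod measurableSet_Icc) (integrableOn_finset_iUnion.2 hint)
      (integrableOn_one_div_one_add_mul_sq
        (h.one_add_rosenOrbit_left_mul_rosenHeight_add_half_pos le_rfl)),
    hcells, h.setIntegral_last_strip,
    log_div (h.rosenDenom_left_pos le_rfl).ne' h.sin_pos.ne', ← cos_half_div_sin_half]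
  ring

end IsRosenPair

section Orbit

variable {lam α x : ℝ}

theorem Tmap_neg (lam α x : ℝ) : Tmap lam α (-x) = Tmap lam α x := by
  simp [Tmap, dfun]

theorem Tmap_eq_of_mem_Ico (hlam : 0 < lam) (hx : x ≠ 0) {d : ℤ}
    (h : |1 / x| - lam * d ∈ Ico ((α - 1) * lam) (α * lam)) :
    Tmap lam α x = |1 / x| - lam * d := by
  have hdigit : dfun lam α x = d := by
    have hquot : |1 / (x * lam)| = |1 / x| / lam := by
      rw [← div_div, abs_div, abs_of_pos hlam]
    rw [dfun, hquot, Int.floor_eq_iff, add_sub_assoc, ← sub_le_iff_le_add, ← lt_sub_iff_add_lt,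
      le_div_iff₀ hlam, div_lt_iff₀ hlam]
    constructor <;> linarith [h.1, h.2]
  rw [Tmap, if_neg hx, hdigit]

theorem Tmap_rosenOrbit {θ w t : ℝ} (hθ : 0 < Real.cos θ) (h₀ : 0 < rosenDenom θ w t)
    (h₁ : 0 < rosenDenom θ w (t + 1))
    (hmem : rosenOrbit θ w (t + 1) ∈ Ico ((α - 1) * (2 * Real.cos θ)) (α * (2 * Real.cos θ))) :
    Tmap (2 * Real.cos θ) α (rosenOrbit θ w t) = rosenOrbit θ w (t + 1) := by
  have hneg := rosenOrbit_neg h₀ h₁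
  have hbranch : |1 / rosenOrbit θ w t| - 2 * Real.cos θ * (1 : ℤ) = rosenOrbit θ w (t + 1) := by
    rw [abs_of_neg (one_div_neg.2 hneg), rosenOrbit_add_one h₁.ne', Int.cast_one, mul_one]
  rw [Tmap_eq_of_mem_Ico (d := 1) (by positivity) hneg.ne (hbranch ▸ hmem), hbranch]

theorem iterate_Tmap_neg_eq_rosenOrbit {θ w : ℝ} {N : ℕ} (hθ : 0 < Real.cos θ)
    (hD : ∀ n : ℕ, n ≤ N → 0 < rosenDenom θ w n)
    (hmem : ∀ n : ℕ, n < N →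
      rosenOrbit θ w (n + 1) ∈ Ico ((α - 1) * (2 * Real.cos θ)) (α * (2 * Real.cos θ)))
    {n : ℕ} (hn : n ≤ N) :
    (Tmap (2 * Real.cos θ) α)^[n] (-w) = rosenOrbit θ w n := by
  induction n with
  | zero =>
    have hsin := hD 0 hn
    rw [Nat.cast_zero, rosenDenom_zero] at hsin
    rw [Nat.cast_zero, rosenOrbit_zero hsin.ne', Function.iterate_zero_apply]
  | succ n ih =>
    have hsucc := hD (n + 1) hn
    push_cast at hsucc ⊢
    rw [Function.iterate_succ_apply', ih (by omega),
      Tmap_rosenOrbit hθ (hD n (by omega)) hsucc (hmem n hn)]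

variable {N n : ℕ} {θ : ℝ}

theorem isRosenPair_of_mem_Ico (hN : 0 < N) (hθ : (N + 1) * θ = Real.pi / 2)
    (hα : α ∈ Ico (1 / 2) (1 / (2 * Real.cos θ))) :
    IsRosenPair N θ ((1 - α) * (2 * Real.cos θ)) (α * (2 * Real.cos θ)) := by
  have hlam : 0 < 2 * Real.cos θ := one_div_pos.1 ((by norm_num : (0 : ℝ) < 1 / 2).trans_le
    (hα.1.trans hα.2.le))
  exact ⟨hN, hθ, by ring, by nlinarith [hα.1], (lt_div_iff₀ hlam).1 hα.2⟩

namespace IsRosenPair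

theorem iterate_Tmap_left
    (h : IsRosenPair N θ ((1 - α) * (2 * Real.cos θ)) (α * (2 * Real.cos θ))) (hn : n ≤ N) :
    (Tmap (2 * Real.cos θ) α)^[n] ((α - 1) * (2 * Real.cos θ)) =
      rosenOrbit θ ((1 - α) * (2 * Real.cos θ)) n := by
  have hneg : (α - 1) * (2 * Real.cos θ) = -((1 - α) * (2 * Real.cos θ)) := by ring
  rw [hneg]
  refine iterate_Tmap_neg_eq_rosenOrbit h.cos_pos (fun n hn => h.rosenDenom_left_pos hn)
    (fun n hn => ?_) hn
  rw [hneg]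
  exact mod_cast h.rosenOrbit_left_mem (Nat.succ_le_of_lt hn)

theorem iterate_Tmap_right
    (h : IsRosenPair N θ ((1 - α) * (2 * Real.cos θ)) (α * (2 * Real.cos θ))) (hn : n < N) :
    (Tmap (2 * Real.cos θ) α)^[n + 1] (α * (2 * Real.cos θ)) =
      rosenOrbit θ (α * (2 * Real.cos θ)) (n + 1) := by
  have hneg : (α - 1) * (2 * Real.cos θ) = -((1 - α) * (2 * Real.cos θ)) := by ring
  rw [Function.iterate_succ_apply, ← Tmap_neg, ← Function.iterate_succ_apply]
  refine mod_cast iterate_Tmap_neg_eq_rosenOrbit h.cos_pos (fun n hn => h.rosenDenom_right_pos hn)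
    (fun n hn => ?_) (Nat.succ_le_of_lt hn)
  rw [hneg]
  exact h.rosenOrbit_right_succ_mem hn

end IsRosenPair

end Orbit

-- At `α = 1/2`, the classical Rosen map, `r n = ℓ n` for `1 ≤ n < p` and the even strips are empty.
theorem stmt8_general (p q : ℕ) (hp : 2 ≤ p) (hq : q = 2 * p) (lam α : ℝ)
    (hlam : lam = 2 * Real.cos (Real.pi / q))
    (hα1 : 1 / 2 ≤ α) (hα2 : α < 1 / lam)
    (ℓ r : ℕ → ℝ)
    (hℓ : ∀ n, ℓ n = (Tmap lam α)^[n] ((α - 1) * lam))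
    (hr : ∀ n, r n = (Tmap lam α)^[n] (α * lam))
    (Hodd Heven : ℕ → ℝ)
    (hHodd : ∀ n : ℕ, Hodd n =
      (Real.cos (n * Real.pi / (2 * (p : ℝ))) - Real.cos (((n : ℝ) - 1) * Real.pi / (2 * (p : ℝ))))
        / (Real.cos (((n : ℝ) + 1) * Real.pi / (2 * (p : ℝ)))
          - Real.cos (n * Real.pi / (2 * (p : ℝ)))))
    (hHeven : ∀ n : ℕ, Heven n =
      Real.sin (n * Real.pi / (2 * (p : ℝ))) / Real.sin (((n : ℝ) + 1) * Real.pi / (2 * (p : ℝ))))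
    (Ω : Set (ℝ × ℝ))
    (hΩ : Ω = (⋃ n ∈ Finset.Icc 1 (p - 1), Ico (ℓ (n - 1)) (r n) ×ˢ Icc (0 : ℝ) (Hodd n))
      ∪ (⋃ n ∈ Finset.Icc 1 (p - 1), Ico (r n) (ℓ n) ×ˢ Icc (0 : ℝ) (Heven n))
      ∪ Ico (ℓ (p - 1)) (r 0) ×ˢ Icc (0 : ℝ) (Hodd p)) :
    ∫ z in Ω, 1 / (1 + z.1 * z.2) ^ 2
      = Real.log ((1 + Real.cos (Real.pi / q)) / Real.sin (Real.pi / q)) := by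
  obtain ⟨N, rfl⟩ : ∃ N, p = N + 1 := ⟨p - 1, by omega⟩
  obtain ⟨θ, hθ⟩ : ∃ θ : ℝ, θ = Real.pi / (2 * ((N + 1 : ℕ) : ℝ)) := ⟨_, rfl⟩
  have hqθ : Real.pi / q = θ := by rw [hθ, hq, Nat.cast_mul, Nat.cast_ofNat]
  simp only [mul_div_assoc, ← hθ] at hHodd hHeven
  rw [hqθ] at hlam ⊢
  subst hlam
  have h : IsRosenPair N θ ((1 - α) * (2 * Real.cos θ)) (α * (2 * Real.cos θ)) :=
    isRosenPair_of_mem_Ico (by omega) (by rw [hθ]; push_cast; field_simp) ⟨hα1, hα2⟩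
  have hodd : ∀ n : ℕ, Hodd (n + 1) = rosenHeight θ (n + 1 / 2) := fun n => by
    rw [hHodd, cos_sub_cos_div_eq_rosenHeight h.sin_half_pos.ne', Nat.cast_add_one,
      add_sub_assoc, sub_half]
  have heven : ∀ n : ℕ, Heven (n + 1) = rosenHeight θ (n + 1) := fun n => by
    rw [hHeven, rosenHeight, Nat.cast_add_one]
  have hregion := rosenRegion_eq_biUnion_Icc
    (fun n hn => (hℓ n).trans (h.iterate_Tmap_left hn)) (hr 0)
    (fun n hn => (hr (n + 1)).trans (h.iterate_Tmap_right hn)) hodd heven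
  rw [Function.iterate_zero_apply] at hregion
  rw [hΩ, add_tsub_cancel_right, ← hregion, h.setIntegral_rosenRegion]

/-- Proposition 2.6 (even case): the integral of `(1+xy)⁻²` over `Ω_α` equals
`log((1 + cos(π/q))/sin(π/q))`; equivalently the normalizing constant is
`C_{q,α} = 1/log((1 + cos(π/q))/sin(π/q))`, independent of `α`. -/
theorem stmt8 (p q : ℕ) (hp : 2 ≤ p) (hq : q = 2 * p) (lam α : ℝ)
    (hlam : lam = 2 * Real.cos (Real.pi / q))
    (hα1 : 1 / 2 < α) (hα2 : α < 1 / lam)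
    (ℓ r : ℕ → ℝ)
    (hℓ : ∀ n, ℓ n = (Tmap lam α)^[n] ((α - 1) * lam))
    (hr : ∀ n, r n = (Tmap lam α)^[n] (α * lam))
    (Hodd Heven : ℕ → ℝ)
    (hHodd : ∀ n : ℕ, Hodd n =
      (Real.cos (n * Real.pi / (2 * (p : ℝ))) - Real.cos (((n : ℝ) - 1) * Real.pi / (2 * (p : ℝ))))
        / (Real.cos (((n : ℝ) + 1) * Real.pi / (2 * (p : ℝ)))
          - Real.cos (n * Real.pi / (2 * (p : ℝ)))))
    (hHeven : ∀ n : ℕ, Heven n =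
      Real.sin (n * Real.pi / (2 * (p : ℝ))) / Real.sin (((n : ℝ) + 1) * Real.pi / (2 * (p : ℝ))))
    (Ω : Set (ℝ × ℝ))
    (hΩ : Ω = (⋃ n ∈ Finset.Icc 1 (p - 1), Ico (ℓ (n - 1)) (r n) ×ˢ Icc (0 : ℝ) (Hodd n))
      ∪ (⋃ n ∈ Finset.Icc 1 (p - 1), Ico (r n) (ℓ n) ×ˢ Icc (0 : ℝ) (Heven n))
      ∪ Ico (ℓ (p - 1)) (r 0) ×ˢ Icc (0 : ℝ) (Hodd p)) :
    ∫ z in Ω, 1 / (1 + z.1 * z.2) ^ 2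
      = Real.log ((1 + Real.cos (Real.pi / q)) / Real.sin (Real.pi / q)) := by
  exact stmt8_general p q hp hq lam α hlam hα1.le hα2 ℓ r hℓ hr Hodd Heven hHodd hHeven Ω hΩ
end

section
/- Let q = 2h+3 with h ≥ 1, λ = 2cos(π/q), ρ = (λ − 2 + √(λ² − 4λ + 8))/2, and ρ/λ < α ≤ 1/λ. Define H_{2n} = sin(nπ/q)/sin((n+1)π/q) and H_{2n−1} = (sin((n−1)π/q) + sin(nπ/q))/(sin(nπ/q) + sin((n+1)π/q)) for n = 1, …, h+1, and let Ω_α = ⋃_{n=1}^{2h+2} J_n × [0, H_n] with J_{2n−1} = [ℓ_{n−1}, r_n), J_{2n} = [r_n, ℓ_n) for n = 1, …, h, J_{2h+1} = [ℓ_h, r_{h+1}) and J_{2h+2} = [r_{h+1}, r_0). Then the map 𝒯_α(x,y) = (T_α(x), 1/(d(x)λ + ε(x)y)) maps Ω_α to Ω_α and is bijective off of a set of two-dimensional Lebesgue measure zero. -/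
open Set MeasureTheory

/-!
Write `a = α * lam`. The endpoints of the laps of `Ω_α` are two interlaced orbits of the digit-one
branch `x ↦ -1 / x - lam`. Since `lam = 2 * cos (π / q)`, sines of multiples of `π / q` compute both
orbits, and their last points are explicit Möbius functions of `a` and `a⁻¹`. Along the orbits the
heights satisfy `H (T x) * (lam - H x) = 1`, and on the last three laps they are `lam - 1`,
`lam / 2` and `1`.

A point `(t, w)` has the preimages `(±(t + k * lam)⁻¹, ±(1 / w - k * lam))`. The two explicit
endpoints match in such a way that the fibres over `(t + k * lam)⁻¹` and `-(t + (k + 1) * lam)⁻¹`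
have total height `lam`. Hence the fibres over all preimages of `t` give a tiling of the half-line
`[1 / H t, ∞)` of values of `1 / w`, so that almost every `(t, w)` with `0 < w ≤ H t` has exactly
one preimage in `Ω_α`, and no point with `w > H t` has any.
-/

section NullSets

theorem exists_null_bijOn {X Y : Type*} [MeasurableSpace X] [MeasurableSpace Y]
    {μ : Measure X} {ν : Measure Y} {f : X → Y} {S Z : Set X} {S' B : Set Y}
    (hZ : μ Z = 0) (hB : ν B = 0) (hfB : μ (f ⁻¹' B) = 0) (hmaps : MapsTo f (S \ Z) S')
    (hinj : InjOn f (S \ (Z ∪ f ⁻¹' B))) (hsurj : SurjOn f (S \ Z) (S' \ B)) :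
    ∃ (N : Set X) (N' : Set Y),
      N ⊆ S ∧ N' ⊆ S' ∧ μ N = 0 ∧ ν N' = 0 ∧ BijOn f (S \ N) (S' \ N') := by
  refine ⟨S ∩ (Z ∪ f ⁻¹' B), S' ∩ B, inter_subset_left, inter_subset_left,
    measure_mono_null inter_subset_right (measure_union_null hZ hfB),
    measure_mono_null inter_subset_right hB, ?_⟩
  rw [sdiff_self_inter, sdiff_self_inter]
  refine ⟨fun z hz ↦ ⟨hmaps ⟨hz.1, fun h ↦ hz.2 (.inl h)⟩, fun h ↦ hz.2 (.inr h)⟩, hinj, ?_⟩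
  intro p hp
  obtain ⟨z, hz, rfl⟩ := hsurj hp
  exact ⟨z, ⟨hz.1, fun h ↦ h.elim hz.2 hp.2⟩, rfl⟩

/-- The union of the vertical lines over `C` and the horizontal lines over `D`. All exceptional
sets below are contained in such a union with `C` and `D` countable. -/
def cross (C D : Set ℝ) : Set (ℝ × ℝ) := Prod.fst ⁻¹' C ∪ Prod.snd ⁻¹' D

theorem volume_cross_eq_zero {C D : Set ℝ} (hC : C.Countable) (hD : D.Countable) :
    volume (cross C D) = 0 :=
  measure_union_null (Measure.quasiMeasurePreserving_fst.preimage_null (hC.measure_zero volume))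
    (Measure.quasiMeasurePreserving_snd.preimage_null (hD.measure_zero volume))

theorem volume_image_prodMap_cross_eq_zero (f g : ℝ → ℝ) {C D : Set ℝ} (hC : C.Countable)
    (hD : D.Countable) : volume (Prod.map f g '' cross C D) = 0 := by
  refine measure_mono_null ?_ (volume_cross_eq_zero (hC.image f) (hD.image g))
  rintro _ ⟨p, hp | hp, rfl⟩
  exacts [.inl (mem_image_of_mem f hp), .inr (mem_image_of_mem g hp)]

end NullSets

section Branches

variable {lam α x : ℝ} {k : ℤ}

theorem dfun_eq_iff (hlam : 0 < lam) :
    dfun lam α x = k ↔ |x⁻¹| - k * lam ∈ Ico (α * lam - lam) (α * lam) := by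
  have habs : |1 / (x * lam)| = |x⁻¹| / lam := by
    rw [one_div, mul_inv, abs_mul, abs_of_pos (inv_pos.2 hlam), div_eq_mul_inv]
  have hmul : |x⁻¹| / lam * lam = |x⁻¹| := div_mul_cancel₀ _ hlam.ne'
  rw [dfun, habs, Int.floor_eq_iff, mem_Ico, ← mul_le_mul_iff_of_pos_right hlam,
    ← mul_lt_mul_iff_of_pos_right hlam, add_sub_assoc, add_mul, add_mul, hmul]
  constructor <;> rintro ⟨h₁, h₂⟩ <;> constructor <;> linarith

theorem Tmap_of_ne_zero (hx : x ≠ 0) : Tmap lam α x = |x⁻¹| - dfun lam α x * lam := by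
  rw [Tmap, if_neg hx, one_div, mul_comm lam]

theorem Tmap_mem_Ico (hlam : 0 < lam) (hx : x ≠ 0) :
    Tmap lam α x ∈ Ico (α * lam - lam) (α * lam) := by
  rw [Tmap_of_ne_zero hx]
  exact (dfun_eq_iff hlam).1 rfl

theorem one_le_dfun (hlam : 0 < lam) (hα₀ : lam - 1 ≤ α * lam) (hα₁ : α * lam ≤ 1)
    (hx₀ : x ≠ 0) (hx : x ∈ Ico (α * lam - lam) (α * lam)) : 1 ≤ dfun lam α x := by
  have hx_abs : |x| ≤ 1 := abs_le.2 ⟨by linarith [hx.1], by linarith [hx.2]⟩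
  have hinv : 1 ≤ |x⁻¹| := by
    rw [abs_inv]
    exact (one_le_inv₀ (abs_pos.2 hx₀)).2 hx_abs
  have hT := (Tmap_mem_Ico (α := α) hlam hx₀).2
  rw [Tmap_of_ne_zero hx₀] at hT
  have hpos : (0 : ℝ) < dfun lam α x := pos_of_mul_pos_left (by linarith) hlam.le
  exact Int.cast_pos.1 hpos

/-- The inverse branch of `Tnat lam α` of digit `k` and sign `ε`, in which `Tnat` is undone one
coordinate at a time. -/
noncomputable def invBranch (lam : ℝ) (k : ℤ) (ε : ℝ) : ℝ × ℝ → ℝ × ℝ :=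
  Prod.map (fun t ↦ ε * (t + k * lam)⁻¹) (fun w ↦ ε * (w⁻¹ - k * lam))

theorem invBranch_fst_ne_zero {ε : ℝ} (hε : ε = 1 ∨ ε = -1) {p : ℝ × ℝ}
    (hpos : 0 < p.1 + k * lam) : (invBranch lam k ε p).1 ≠ 0 :=
  mul_ne_zero (by rcases hε with rfl | rfl <;> norm_num) (inv_pos.2 hpos).ne'

theorem Tnat_invBranch (hlam : 0 < lam) {ε : ℝ} (hε : ε = 1 ∨ ε = -1) {p : ℝ × ℝ}
    (hp : p.1 ∈ Ico (α * lam - lam) (α * lam)) (hpos : 0 < p.1 + k * lam) :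
    Tnat lam α (invBranch lam k ε p) = p := by
  have hε_abs : |ε| = 1 := by rcases hε with rfl | rfl <;> simp
  have hx : ε * (p.1 + k * lam)⁻¹ ≠ 0 := invBranch_fst_ne_zero hε hpos
  have hinv : |(ε * (p.1 + k * lam)⁻¹)⁻¹| = p.1 + k * lam := by
    rw [abs_inv, abs_mul, hε_abs, one_mul, abs_inv, inv_inv, abs_of_pos hpos]
  have hd : dfun lam α (ε * (p.1 + k * lam)⁻¹) = k := by
    rw [dfun_eq_iff hlam, hinv, add_sub_cancel_right]
    exact hp
  have hsign : Real.sign (ε * (p.1 + k * lam)⁻¹) = ε := by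
    rcases hε with rfl | rfl
    · exact Real.sign_of_pos (by positivity)
    · exact Real.sign_of_neg (by simpa using hpos)
  have hε_mul : ε * ε = 1 := by rcases hε with rfl | rfl <;> norm_num
  ext
  · simp only [Tnat, invBranch, Prod.map_fst]
    rw [Tmap_of_ne_zero hx, hd, hinv, add_sub_cancel_right]
  · simp only [Tnat, invBranch, Prod.map_fst, Prod.map_snd]
    rw [hd, hsign, ← mul_assoc, hε_mul, one_mul, add_sub_cancel, one_div, inv_inv]

theorem sign_eq_one_or_neg_one (hx : x ≠ 0) : Real.sign x = 1 ∨ Real.sign x = -1 :=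
  (Real.sign_apply_eq_of_ne_zero x hx).symm

theorem invBranch_Tnat {z : ℝ × ℝ} (hz : z.1 ≠ 0) :
    invBranch lam (dfun lam α z.1) (Real.sign z.1) (Tnat lam α z) = z := by
  have hε_mul : Real.sign z.1 * Real.sign z.1 = 1 := by
    rcases sign_eq_one_or_neg_one hz with h | h <;> rw [h] <;> norm_num
  ext
  · simp only [Tnat, invBranch, Prod.map_fst]
    rw [Tmap_of_ne_zero hz, sub_add_cancel, abs_inv, inv_inv]
    rcases hz.lt_or_gt with h | h
    · rw [Real.sign_of_neg h, abs_of_neg h, neg_one_mul, neg_neg]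
    · rw [Real.sign_of_pos h, abs_of_pos h, one_mul]
  · simp only [Tnat, invBranch, Prod.map_snd]
    rw [one_div, inv_inv, add_sub_cancel_left, ← mul_assoc, hε_mul, one_mul]

theorem volume_Tnat_preimage_cross_eq_zero {C D : Set ℝ} (hC : C.Countable) (hD : D.Countable) :
    volume (Tnat lam α ⁻¹' cross C D) = 0 := by
  have hsub : Tnat lam α ⁻¹' cross C D ⊆ cross {0} ∅ ∪
      ⋃ k : ℤ, invBranch lam k 1 '' cross C D ∪ invBranch lam k (-1) '' cross C D := by
    intro z hz
    by_cases hz₀ : z.1 = 0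
    · exact .inl (.inl hz₀)
    · refine .inr (mem_iUnion.2 ⟨dfun lam α z.1, ?_⟩)
      have hmem := mem_image_of_mem (invBranch lam (dfun lam α z.1) (Real.sign z.1))
        (show Tnat lam α z ∈ cross C D from hz)
      rw [invBranch_Tnat hz₀] at hmem
      rcases sign_eq_one_or_neg_one hz₀ with h | h <;> rw [h] at hmem
      exacts [.inl hmem, .inr hmem]
  refine measure_mono_null hsub (measure_union_null
    (volume_cross_eq_zero (countable_singleton 0) countable_empty) (measure_iUnion_null fun k ↦ ?_))
  exact measure_union_null (volume_image_prodMap_cross_eq_zero _ _ hC hD)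
    (volume_image_prodMap_cross_eq_zero _ _ hC hD)

end Branches

/-- The parameters to which the argument applies, with `a = α * lam`: the inequality `quad` says
that `a` exceeds `ρ`, the positive root of `t ^ 2 + (2 - lam) * t = 1`. -/
structure RosenParams (lam a : ℝ) : Prop where
  lam_pos : 0 < lam
  two_le_sq : 2 ≤ lam ^ 2
  lam_lt_two : lam < 2
  a_pos : 0 < a
  a_le_one : a ≤ 1
  quad : 1 < a ^ 2 + (2 - lam) * a

/-- For `q = 2h + 3`, the `h`-th iterate of `c - lam` under the digit-one branch `negBranch lam`.
For `c = a` this is `ℓ_h`, and for `c = a⁻¹` it is `r_{h+1}`. -/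
noncomputable def finalEndpoint (lam c : ℝ) : ℝ := (c - 1) / (1 - (lam - 1) * c)

/-- The branch of `T_α` of digit one and sign `-1`. -/
noncomputable def negBranch (lam x : ℝ) : ℝ := -x⁻¹ - lam

theorem negBranch_neg_inv_add (lam t : ℝ) : negBranch lam (-(t + lam)⁻¹) = t := by
  rw [negBranch, inv_neg, inv_inv, neg_neg, add_sub_cancel_right]

namespace RosenParams

variable {lam a t V : ℝ} {k k' : ℤ}

theorem one_lt_lam (P : RosenParams lam a) : 1 < lam := by
  nlinarith [P.two_le_sq, P.lam_pos]

theorem lam_sub_one_lt (P : RosenParams lam a) : lam - 1 < a := by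
  nlinarith [P.quad, P.a_pos, P.a_le_one]

theorem lam_lt_two_mul (P : RosenParams lam a) : lam < 2 * a := by
  by_contra! h
  have h₁ : a ^ 2 ≤ (lam / 2) ^ 2 := pow_le_pow_left₀ P.a_pos.le (by linarith) 2
  have h₂ : (2 - lam) * a ≤ (2 - lam) * (lam / 2) :=
    mul_le_mul_of_nonneg_left (by linarith) (by linarith [P.lam_lt_two])
  linarith [P.quad, sq_nonneg (lam - 2)]

theorem one_le_inv (P : RosenParams lam a) : 1 ≤ a⁻¹ :=
  (one_le_inv₀ P.a_pos).2 P.a_le_one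

theorem inv_lt_add (P : RosenParams lam a) : a⁻¹ < a + lam := by
  rw [inv_lt_iff_one_lt_mul₀' P.a_pos]
  nlinarith [P.quad, mul_pos P.a_pos (sub_pos.2 P.one_lt_lam)]

theorem inv_add_le_sub (P : RosenParams lam a) : (a + lam)⁻¹ ≤ lam - a := by
  have hpos : 0 < a + lam := add_pos P.a_pos P.lam_pos
  rw [inv_le_iff_one_le_mul₀ hpos]
  nlinarith [P.two_le_sq, P.a_le_one, P.a_pos]

theorem one_sub_mul_pos (P : RosenParams lam a) : 0 < 1 - (lam - 1) * a := by
  nlinarith [P.lam_lt_two, P.one_lt_lam, P.a_le_one, P.a_pos]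

theorem finalEndpoint_inv (P : RosenParams lam a) :
    finalEndpoint lam a⁻¹ = (1 - a) / (a - lam + 1) := by
  have ha := P.a_pos.ne'
  have h₁ : a - lam + 1 ≠ 0 := by linarith [P.lam_sub_one_lt]
  have h₂ : 1 - (lam - 1) * a⁻¹ = (a - lam + 1) / a := by field_simp; ring
  rw [finalEndpoint, h₂]
  field_simp

theorem finalEndpoint_nonpos (P : RosenParams lam a) : finalEndpoint lam a ≤ 0 :=
  div_nonpos_of_nonpos_of_nonneg (by linarith [P.a_le_one]) P.one_sub_mul_pos.le

theorem finalEndpoint_inv_nonneg (P : RosenParams lam a) : 0 ≤ finalEndpoint lam a⁻¹ := by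
  rw [P.finalEndpoint_inv]
  exact div_nonneg (by linarith [P.a_le_one]) (by linarith [P.lam_sub_one_lt])

theorem finalEndpoint_inv_lt (P : RosenParams lam a) : finalEndpoint lam a⁻¹ < a := by
  rw [P.finalEndpoint_inv, div_lt_iff₀ (by linarith [P.lam_sub_one_lt])]
  linarith [P.quad]

-- Matching: both sides say `(1 - a) * V < 1 + a - lam`.
theorem neg_inv_add_lt_finalEndpoint_iff (P : RosenParams lam a) (hV : 0 < V) :
    -(V + lam)⁻¹ < finalEndpoint lam a ↔ finalEndpoint lam a⁻¹ < V⁻¹ := by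
  have h₁ : -finalEndpoint lam a = (1 - a) / (1 - (lam - 1) * a) := by
    rw [finalEndpoint, ← neg_div, neg_sub]
  rw [neg_lt, h₁, P.finalEndpoint_inv, div_lt_iff₀ P.one_sub_mul_pos,
    div_lt_iff₀ (by linarith [P.lam_sub_one_lt]), lt_inv_mul_iff₀ (add_pos hV P.lam_pos),
    lt_inv_mul_iff₀ hV]
  constructor <;> intro h <;> linarith

theorem le_neg_inv_add_of_negBranch_le (P : RosenParams lam a)
    (ht : negBranch lam (a - lam) ≤ t) : a - lam ≤ -(t + lam)⁻¹ := by
  have hpos : 0 < lam - a := by linarith [P.one_lt_lam, P.a_le_one]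
  have h : (lam - a)⁻¹ ≤ t + lam := by
    rw [negBranch, ← inv_neg, neg_sub] at ht
    linarith
  exact le_neg.1 (by simpa only [neg_sub] using inv_le_of_inv_le₀ hpos h)

theorem le_add_mul_lam (P : RosenParams lam a) (ht : t ∈ Ico (a - lam) a) (hk : 1 ≤ k) :
    a ≤ t + k * lam := by
  have hk' : (1 : ℝ) ≤ k := by exact_mod_cast hk
  linarith [ht.1, le_mul_of_one_le_left P.lam_pos.le hk']

theorem neg_inv_mem_Ico (P : RosenParams lam a) (hV : a + lam ≤ V) :
    -V⁻¹ ∈ Ico (a - lam) a := by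
  have hpos : 0 < a + lam := add_pos P.a_pos P.lam_pos
  have hinv : V⁻¹ ≤ (a + lam)⁻¹ := inv_anti₀ hpos hV
  exact ⟨by linarith [P.inv_add_le_sub],
    (neg_lt_zero.2 (inv_pos.2 (hpos.trans_le hV))).trans P.a_pos⟩

theorem eq_one_of_add_mul_le_inv (P : RosenParams lam a) (ht : t ∈ Ico (a - lam) a) (hk : 1 ≤ k)
    (h : t + k * lam ≤ a⁻¹) : k = 1 := by
  by_contra hne
  have hk₂ : (2 : ℝ) ≤ k := by exact_mod_cast (by omega : 2 ≤ k)
  linarith [mul_le_mul_of_nonneg_right hk₂ P.lam_pos.le, P.inv_lt_add, ht.1]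

theorem eq_of_abs_mul_sub_mul_le_one (P : RosenParams lam a) (h : |k * lam - k' * lam| ≤ 1) :
    k = k' := by
  rw [← sub_mul, abs_mul, abs_of_pos P.lam_pos] at h
  have hlt : |(k - k' : ℝ)| < 1 := by
    nlinarith [P.one_lt_lam, abs_nonneg (k - k' : ℝ)]
  exact sub_eq_zero.1 (Int.abs_lt_one_iff.1 (by exact_mod_cast hlt))

end RosenParams

/-- The region between `0` and the graph of `H` over the interval `[a - lam, a)`. -/
def region (lam a : ℝ) (H : ℝ → ℝ) : Set (ℝ × ℝ) :=
  {z | z.1 ∈ Ico (a - lam) a ∧ z.2 ∈ Icc 0 (H z.1)}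

/-- The properties of the height function of `Ω_α`, as a function of the abscissa, that make the
natural extension bijective. The orbits of the endpoints enter only through `finalEndpoint`. -/
structure IsFiberHeight (lam a : ℝ) (H : ℝ → ℝ) : Prop where
  mem_Icc : ∀ x ∈ Ico (a - lam) a, H x ∈ Icc 0 1
  first : ∀ x ∈ Ico (a - lam) (a⁻¹ - lam), (lam + 1) * H x = 1
  second : ∀ x ∈ Ico (a⁻¹ - lam) (negBranch lam (a - lam)), lam * H x = 1
  left : ∀ x ∈ Ico (-(a + lam)⁻¹) (finalEndpoint lam a), H x = lam - 1
  middle : ∀ x ∈ Ico (finalEndpoint lam a) (finalEndpoint lam a⁻¹), H x = lam / 2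
  right : ∀ x ∈ Ico (finalEndpoint lam a⁻¹) a, H x = 1
  recursion : ∀ x ∈ Ico (a - lam) (-(a + lam)⁻¹), H (negBranch lam x) * (lam - H x) = 1

/-- The abscissas of the vertical lines to be removed: the right end of the first lap, and the
points `t` for which some `(t + k * lam)⁻¹` is the breakpoint `finalEndpoint lam a⁻¹`. -/
noncomputable def exceptionalAbscissas (lam a : ℝ) : Set ℝ :=
  insert (a⁻¹ - lam) (range fun k : ℤ ↦ (finalEndpoint lam a⁻¹)⁻¹ - k * lam)

/-- The ordinates `(k * lam + y)⁻¹` of the horizontal lines to be removed, where `y` is one of the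
heights `0`, `1` and `lam / 2` at which the images of two branches meet. For `k = 0` and `y = 0`
this is the ordinate `0⁻¹ = 0`. -/
noncomputable def exceptionalOrdinates (lam : ℝ) : Set ℝ :=
  ⋃ k : ℤ, {(k * lam)⁻¹, (k * lam + 1)⁻¹, (k * lam + lam / 2)⁻¹}

theorem countable_exceptionalAbscissas (lam a : ℝ) : (exceptionalAbscissas lam a).Countable :=
  (countable_range _).insert _

theorem countable_exceptionalOrdinates (lam : ℝ) : (exceptionalOrdinates lam).Countable :=
  countable_iUnion fun _ ↦ (toFinite _).countable

theorem zero_mem_exceptionalOrdinates (lam : ℝ) : 0 ∈ exceptionalOrdinates lam :=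
  mem_iUnion.2 ⟨0, .inl (by rw [Int.cast_zero, zero_mul, inv_zero])⟩

theorem inv_ne_of_notMem {lam a t : ℝ} (ht : t ∉ exceptionalAbscissas lam a) (k : ℤ) :
    (t + k * lam)⁻¹ ≠ finalEndpoint lam a⁻¹ := fun h ↦
  ht (.inr ⟨k, by simp only [← h, inv_inv, add_sub_cancel_right]⟩)

namespace IsFiberHeight

variable {lam a t v y V : ℝ} {H : ℝ → ℝ} {k k' : ℤ}

theorem eq_lam_sub_one (P : RosenParams lam a) (D : IsFiberHeight lam a H) (hV : a ≤ V)
    (h : finalEndpoint lam a⁻¹ < V⁻¹) : H (-(V + lam)⁻¹) = lam - 1 := by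
  refine D.left _ ⟨neg_le_neg (inv_anti₀ (add_pos P.a_pos P.lam_pos) (by linarith)), ?_⟩
  exact (P.neg_inv_add_lt_finalEndpoint_iff (P.a_pos.trans_le hV)).2 h

-- The fibres over the two preimages `V⁻¹` and `-(V + lam)⁻¹` of a point tile an interval of
-- length `lam`.
theorem eq_one_or_eq_half_and_add_eq (P : RosenParams lam a) (D : IsFiberHeight lam a H)
    (hV : a ≤ V) (hV' : V⁻¹ < a) (hne : V⁻¹ ≠ finalEndpoint lam a⁻¹) :
    (H V⁻¹ = 1 ∨ H V⁻¹ = lam / 2) ∧ H V⁻¹ + H (-(V + lam)⁻¹) = lam := by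
  have hV₀ : 0 < V := P.a_pos.trans_le hV
  rcases hne.lt_or_gt with h | h
  · have h' : finalEndpoint lam a ≤ -(V + lam)⁻¹ :=
      not_lt.1 fun h'' ↦ h.not_gt ((P.neg_inv_add_lt_finalEndpoint_iff hV₀).1 h'')
    have hneg : -(V + lam)⁻¹ < 0 := neg_lt_zero.2 (inv_pos.2 (add_pos hV₀ P.lam_pos))
    have h₁ : H V⁻¹ = lam / 2 :=
      D.middle _ ⟨P.finalEndpoint_nonpos.trans (inv_pos.2 hV₀).le, h⟩
    have h₂ : H (-(V + lam)⁻¹) = lam / 2 :=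
      D.middle _ ⟨h', hneg.trans_le P.finalEndpoint_inv_nonneg⟩
    exact ⟨.inr h₁, by rw [h₁, h₂, add_halves]⟩
  · have h₁ : H V⁻¹ = 1 := D.right _ ⟨h.le, hV'⟩
    exact ⟨.inl h₁, by rw [h₁, D.eq_lam_sub_one P hV h, add_sub_cancel]⟩

theorem nonneg (D : IsFiberHeight lam a H) (ht : t ∈ Ico (a - lam) a) : 0 ≤ H t :=
  (D.mem_Icc t ht).1

theorem le_one (D : IsFiberHeight lam a H) (ht : t ∈ Ico (a - lam) a) : H t ≤ 1 :=
  (D.mem_Icc t ht).2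

theorem mul_lam_sub_eq_one (D : IsFiberHeight lam a H)
    (ht : t < a) (hpos : 0 < t + lam) (hx : a - lam ≤ -(t + lam)⁻¹) :
    H t * (lam - H (-(t + lam)⁻¹)) = 1 := by
  have hlt : -(t + lam)⁻¹ < -(a + lam)⁻¹ :=
    neg_lt_neg (inv_strictAnti₀ hpos (by linarith))
  simpa only [negBranch_neg_inv_add] using D.recursion _ ⟨hx, hlt⟩

theorem one_le_mul_of_lam_le (P : RosenParams lam a) (D : IsFiberHeight lam a H)
    (ht₁ : a⁻¹ - lam ≤ t) (ht₂ : t < a) (hv : lam ≤ v) : 1 ≤ H t * v := by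
  have ht : t ∈ Ico (a - lam) a :=
    ⟨by linarith [P.one_le_inv, P.a_le_one], ht₂⟩
  have hmono : H t * lam ≤ H t * v := mul_le_mul_of_nonneg_left hv (D.nonneg ht)
  rcases lt_or_ge t (negBranch lam (a - lam)) with h | h
  · linarith [D.second t ⟨ht₁, h⟩]
  · have hx := P.le_neg_inv_add_of_negBranch_le h
    have hpos : 0 < t + lam := by linarith [P.one_le_inv]
    have hx' : -(t + lam)⁻¹ < a := (neg_lt_zero.2 (inv_pos.2 hpos)).trans P.a_pos
    have := mul_nonneg (D.nonneg ht) (D.nonneg ⟨hx, hx'⟩)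
    linarith [D.mul_lam_sub_eq_one ht₂ hpos hx]

theorem one_le_mul_of_lam_add_one_le (P : RosenParams lam a) (D : IsFiberHeight lam a H)
    (ht : t ∈ Ico (a - lam) a) (hv : lam + 1 ≤ v) : 1 ≤ H t * v := by
  rcases lt_or_ge t (a⁻¹ - lam) with h | h
  · linarith [D.first t ⟨ht.1, h⟩, mul_le_mul_of_nonneg_left hv (D.nonneg ht)]
  · exact D.one_le_mul_of_lam_le P h ht.2 (by linarith)

theorem lam_add_one_le (P : RosenParams lam a) (D : IsFiberHeight lam a H)
    (ht : t ∈ Ico (a - lam) (a⁻¹ - lam)) (hv : 1 ≤ H t * v) : lam + 1 ≤ v := by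
  have hpos : 0 < lam + 1 := by linarith [P.lam_pos]
  rw [eq_inv_of_mul_eq_one_right (D.first t ht), ← div_eq_inv_mul, one_le_div hpos] at hv
  exact hv

theorem lam_sub_le (P : RosenParams lam a) (D : IsFiberHeight lam a H)
    (ht : t ∈ Ico (a - lam) a) (hv : 1 ≤ H t * v) (hvlam : v < lam) :
    a - lam ≤ -(t + lam)⁻¹ ∧ lam - v ≤ H (-(t + lam)⁻¹) := by
  have hHt : 0 < H t := (D.nonneg ht).lt_of_ne fun h ↦ by
    rw [← h, zero_mul] at hv
    exact hv.not_gt one_pos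
  rcases lt_or_ge t (a⁻¹ - lam) with h₁ | h₁
  · linarith [D.lam_add_one_le P ⟨ht.1, h₁⟩ hv]
  rcases lt_or_ge t (negBranch lam (a - lam)) with h₂ | h₂
  · linarith [D.second t ⟨h₁, h₂⟩, mul_lt_mul_of_pos_left hvlam hHt]
  have hx := P.le_neg_inv_add_of_negBranch_le h₂
  have hpos : 0 < t + lam := by linarith [P.one_le_inv]
  have hle : H t * (lam - H (-(t + lam)⁻¹)) ≤ H t * v :=
    (D.mul_lam_sub_eq_one ht.2 hpos hx).trans_le hv
  exact ⟨hx, by linarith [le_of_mul_le_mul_left hle hHt]⟩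

theorem one_le_mul_add (P : RosenParams lam a) (D : IsFiberHeight lam a H)
    (ht : t ∈ Ico (a - lam) a) (hk : 1 ≤ k) (hx : (t + k * lam)⁻¹ < a) (hy : 0 ≤ y) :
    1 ≤ H t * (k * lam + y) := by
  rcases hk.eq_or_lt' with rfl | hk₂
  · have hlt : a⁻¹ < t + lam := by
      have := inv_lt_of_inv_lt₀ (P.a_pos.trans_le (P.le_add_mul_lam ht hk)) hx
      rwa [Int.cast_one, one_mul] at this
    exact D.one_le_mul_of_lam_le P (by linarith) ht.2 (by push_cast; linarith)
  · have hk₂' : (2 : ℝ) ≤ k := by exact_mod_cast hk₂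
    refine D.one_le_mul_of_lam_add_one_le P ht ?_
    linarith [mul_le_mul_of_nonneg_right hk₂' P.lam_pos.le, P.one_lt_lam]

theorem one_le_mul_sub (P : RosenParams lam a) (D : IsFiberHeight lam a H)
    (ht : t ∈ Ico (a - lam) a) (hk : 1 ≤ k) (hx : -(t + k * lam)⁻¹ ∈ Ico (a - lam) a)
    (hy : y ≤ H (-(t + k * lam)⁻¹)) : 1 ≤ H t * (k * lam - y) := by
  have hy₁ : y ≤ 1 := hy.trans (D.le_one hx)
  obtain rfl | rfl | hk₃ : k = 1 ∨ k = 2 ∨ 3 ≤ k := by omega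
  · have hpos := P.a_pos.trans_le (P.le_add_mul_lam ht le_rfl)
    simp only [Int.cast_one, one_mul] at hx hy hpos ⊢
    rw [← D.mul_lam_sub_eq_one ht.2 hpos hx.1]
    exact mul_le_mul_of_nonneg_left (by linarith) (D.nonneg ht)
  · have hlam := P.one_lt_lam
    push_cast at hy ⊢
    rcases lt_or_ge t (a⁻¹ - lam) with h | h
    · have hinv : a ≤ (t + lam)⁻¹ :=
        (le_inv_comm₀ P.a_pos (by linarith [ht.1, P.a_pos])).2 (by linarith)
      have hH := D.eq_lam_sub_one P (by linarith [ht.1]) (P.finalEndpoint_inv_lt.trans_le hinv)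
      rw [add_assoc, ← two_mul] at hH
      exact D.one_le_mul_of_lam_add_one_le P ht (by linarith)
    · exact D.one_le_mul_of_lam_le P h ht.2 (by linarith)
  · have hk₃' : (3 : ℝ) ≤ k := by exact_mod_cast hk₃
    refine D.one_le_mul_of_lam_add_one_le P ht ?_
    linarith [mul_le_mul_of_nonneg_right hk₃' P.lam_pos.le, P.one_lt_lam]

theorem mem_region_or_mem_region (P : RosenParams lam a) (D : IsFiberHeight lam a H)
    (hV : a ≤ V) (hV' : V⁻¹ < a) (hne : V⁻¹ ≠ finalEndpoint lam a⁻¹) (hy : y ∈ Ico 0 lam) :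
    (V⁻¹, y) ∈ region lam a H ∨ (-(V + lam)⁻¹, lam - y) ∈ region lam a H := by
  rcases le_or_gt y (H V⁻¹) with h | h
  · have hnonneg : 0 ≤ V⁻¹ := inv_nonneg.2 (P.a_pos.le.trans hV)
    exact .inl ⟨⟨by linarith [P.one_lt_lam, P.a_le_one], hV'⟩, hy.1, h⟩
  · have hsum := (D.eq_one_or_eq_half_and_add_eq P hV hV' hne).2
    exact .inr ⟨P.neg_inv_mem_Ico (by linarith), by linarith [hy.2], by linarith⟩

theorem neg_two_mem_region (P : RosenParams lam a) (D : IsFiberHeight lam a H)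
    (ht : t ∈ Ico (a - lam) (a⁻¹ - lam)) (hv : v ∈ Icc (lam + 1) (2 * lam)) :
    (-(t + 2 * lam)⁻¹, 2 * lam - v) ∈ region lam a H := by
  have hinv : a ≤ (t + lam)⁻¹ :=
    (le_inv_comm₀ P.a_pos (by linarith [ht.1, P.a_pos])).2 (by linarith [ht.2])
  have hH := D.eq_lam_sub_one P (by linarith [ht.1]) (P.finalEndpoint_inv_lt.trans_le hinv)
  rw [add_assoc, ← two_mul] at hH
  refine ⟨P.neg_inv_mem_Ico (by linarith [ht.1]), by linarith [hv.2], ?_⟩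
  change 2 * lam - v ≤ H (-(t + 2 * lam)⁻¹)
  linarith [hv.1]

theorem exists_digit (P : RosenParams lam a) (D : IsFiberHeight lam a H)
    (ht : t ∈ Ico (a - lam) a) (ht₀ : t ∉ exceptionalAbscissas lam a) (hv : 1 ≤ H t * v) :
    ∃ k : ℤ, 1 ≤ k ∧ (((t + k * lam)⁻¹, v - k * lam) ∈ region lam a H ∨
      (-(t + k * lam)⁻¹, k * lam - v) ∈ region lam a H) := by
  obtain ⟨k, hkv, hvk⟩ : ∃ k : ℤ, k * lam ≤ v ∧ v < (k + 1) * lam :=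
    ⟨⌊v / lam⌋, (le_div_iff₀ P.lam_pos).1 (Int.floor_le _),
      (div_lt_iff₀ P.lam_pos).1 (Int.lt_floor_add_one _)⟩
  have hv₀ : 0 < v := pos_of_mul_pos_right (one_pos.trans_le hv) (D.nonneg ht)
  have hk₀ : (0 : ℝ) < k + 1 := pos_of_mul_pos_left (hv₀.trans hvk) P.lam_pos.le
  obtain rfl | hk : k = 0 ∨ 1 ≤ k := by
    have : 0 < k + 1 := by exact_mod_cast hk₀
    omega
  · rw [Int.cast_zero, zero_add, one_mul] at hvk
    obtain ⟨hx, hy⟩ := D.lam_sub_le P ht hv hvk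
    have hpos : 0 < t + lam := by linarith [ht.1, P.a_pos]
    refine ⟨1, le_rfl, .inr ?_⟩
    rw [Int.cast_one, one_mul]
    exact ⟨⟨hx, (neg_lt_zero.2 (inv_pos.2 hpos)).trans P.a_pos⟩, by linarith, hy⟩
  have hV := P.le_add_mul_lam ht hk
  rcases lt_or_ge (t + k * lam)⁻¹ a with h | h
  · rcases D.mem_region_or_mem_region P hV h (inv_ne_of_notMem ht₀ k)
      ⟨sub_nonneg.2 hkv, by linarith⟩ with hmem | hmem
    · exact ⟨k, hk, .inl hmem⟩
    · refine ⟨k + 1, by omega, .inr ?_⟩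
      convert hmem using 2 <;> push_cast <;> ring
  · have hle : t + k * lam ≤ a⁻¹ := (le_inv_comm₀ P.a_pos (P.a_pos.trans_le hV)).1 h
    obtain rfl := P.eq_one_of_add_mul_le_inv ht hk hle
    rw [Int.cast_one, one_mul] at hle
    rw [Int.cast_one, one_add_one_eq_two] at hvk
    have ht' : t ∈ Ico (a - lam) (a⁻¹ - lam) :=
      ⟨ht.1, (le_sub_iff_add_le.2 hle).lt_of_ne fun h ↦ ht₀ (.inl h)⟩
    exact ⟨2, by norm_num, .inr <| by
      exact_mod_cast D.neg_two_mem_region P ht' ⟨D.lam_add_one_le P ht' hv, hvk.le⟩⟩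

theorem inv_mem_exceptionalOrdinates (P : RosenParams lam a) (D : IsFiberHeight lam a H)
    (ht : t ∈ Ico (a - lam) a) (ht₀ : t ∉ exceptionalAbscissas lam a) (hk : 1 ≤ k)
    (hmem : ((t + k * lam)⁻¹, v - k * lam) ∈ region lam a H)
    (hmem' : (-(t + k' * lam)⁻¹, k' * lam - v) ∈ region lam a H) :
    v⁻¹ ∈ exceptionalOrdinates lam := by
  obtain ⟨⟨hx₀, hx⟩, hy₀, hy⟩ := hmem
  obtain ⟨hx', hy₀', hy'⟩ := hmem'
  have hy₁ := hy.trans (D.le_one ⟨hx₀, hx⟩)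
  have hy₁' := hy'.trans (D.le_one hx')
  simp only at hx hy₀ hy hy₀' hy' hy₁ hy₁'
  have hk_le : (k : ℝ) ≤ k' := le_of_mul_le_mul_right (by linarith) P.lam_pos
  have hk_lt : (k' : ℝ) < k + 2 := by nlinarith [P.one_lt_lam]
  have hk_le' : k ≤ k' := by exact_mod_cast hk_le
  have hk_lt' : k' < k + 2 := by exact_mod_cast hk_lt
  suffices v = k * lam ∨ v = k * lam + 1 ∨ v = k * lam + lam / 2 from
    mem_iUnion.2 ⟨k, this.imp (congrArg _) (Or.imp (congrArg _) (congrArg _))⟩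
  obtain rfl | rfl : k' = k ∨ k' = k + 1 := by omega
  · exact .inl (by linarith)
  · have hV : t + (k + 1 : ℤ) * lam = t + k * lam + lam := by push_cast; ring
    have hcast : ((k + 1 : ℤ) : ℝ) * lam = k * lam + lam := by push_cast; ring
    obtain ⟨hH, hsum⟩ := D.eq_one_or_eq_half_and_add_eq P (P.le_add_mul_lam ht hk) hx
      (inv_ne_of_notMem ht₀ k)
    rw [hV, hcast] at hy'
    exact .inr (hH.imp (fun h ↦ by linarith) fun h ↦ by linarith)

end IsFiberHeight

theorem one_le_mul_inv_iff {c w : ℝ} (hc : 0 ≤ c) : 1 ≤ c * w⁻¹ ↔ w ∈ Ioc 0 c := by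
  refine ⟨fun h ↦ ?_, fun h ↦ ?_⟩
  · have hw : 0 < w := inv_pos.1 (pos_of_mul_pos_right (one_pos.trans_le h) hc)
    rw [← div_eq_mul_inv, one_le_div hw] at h
    exact ⟨hw, h⟩
  · rw [← div_eq_mul_inv, one_le_div h.1]
    exact h.2

theorem invBranch_one (lam : ℝ) (k : ℤ) (p : ℝ × ℝ) :
    invBranch lam k 1 p = ((p.1 + k * lam)⁻¹, p.2⁻¹ - k * lam) := by
  simp only [invBranch, Prod.map, one_mul]

theorem invBranch_neg_one (lam : ℝ) (k : ℤ) (p : ℝ × ℝ) :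
    invBranch lam k (-1) p = (-(p.1 + k * lam)⁻¹, k * lam - p.2⁻¹) := by
  simp only [invBranch, Prod.map, neg_one_mul, neg_sub]

namespace IsFiberHeight

variable {lam a α ε ε' : ℝ} {H : ℝ → ℝ} {k k' : ℤ} {p : ℝ × ℝ}

theorem mem_region_of_invBranch_mem (P : RosenParams lam a) (D : IsFiberHeight lam a H)
    (hp : p.1 ∈ Ico (a - lam) a) (hk : 1 ≤ k) (hε : ε = 1 ∨ ε = -1)
    (h : invBranch lam k ε p ∈ region lam a H) : p ∈ region lam a H := by
  refine ⟨hp, Ioc_subset_Icc_self ((one_le_mul_inv_iff (D.nonneg hp)).1 ?_)⟩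
  rcases hε with rfl | rfl
  · rw [invBranch_one] at h
    simpa only [add_sub_cancel] using D.one_le_mul_add P hp hk h.1.2 h.2.1
  · rw [invBranch_neg_one] at h
    simpa only [sub_sub_cancel] using D.one_le_mul_sub P hp hk h.1 h.2.2

theorem exists_invBranch_mem (P : RosenParams lam a) (D : IsFiberHeight lam a H)
    (hp : p ∈ region lam a H) (hp₁ : p.1 ∉ exceptionalAbscissas lam a) (hp₂ : p.2 ≠ 0) :
    ∃ (k : ℤ) (ε : ℝ), 1 ≤ k ∧ (ε = 1 ∨ ε = -1) ∧ invBranch lam k ε p ∈ region lam a H := by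
  have hv := (one_le_mul_inv_iff (D.nonneg hp.1)).2 ⟨hp.2.1.lt_of_ne' hp₂, hp.2.2⟩
  obtain ⟨k, hk, h | h⟩ := D.exists_digit P hp.1 hp₁ hv
  · exact ⟨k, 1, hk, .inl rfl, by rwa [invBranch_one]⟩
  · exact ⟨k, -1, hk, .inr rfl, by rwa [invBranch_neg_one]⟩

theorem invBranch_mem_unique (P : RosenParams lam a) (D : IsFiberHeight lam a H)
    (hp : p.1 ∈ Ico (a - lam) a) (hp' : p ∉ cross (exceptionalAbscissas lam a)
      (exceptionalOrdinates lam)) (hk : 1 ≤ k) (hk' : 1 ≤ k') (hε : ε = 1 ∨ ε = -1)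
    (hε' : ε' = 1 ∨ ε' = -1) (h : invBranch lam k ε p ∈ region lam a H)
    (h' : invBranch lam k' ε' p ∈ region lam a H) : k = k' ∧ ε = ε' := by
  have hp₁ : p.1 ∉ exceptionalAbscissas lam a := fun h ↦ hp' (.inl h)
  have hp₂ : p.2⁻¹⁻¹ ∉ exceptionalOrdinates lam := fun h ↦ hp' (.inr (by rwa [inv_inv] at h))
  have hdist {z z' : ℝ × ℝ} (hz : z ∈ region lam a H) (hz' : z' ∈ region lam a H) :
      |z.2 - z'.2| ≤ 1 := abs_sub_le_of_nonneg_of_le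
    hz.2.1 (hz.2.2.trans (D.le_one hz.1)) hz'.2.1 (hz'.2.2.trans (D.le_one hz'.1))
  rcases hε with rfl | rfl <;> rcases hε' with rfl | rfl <;>
    simp only [invBranch_one, invBranch_neg_one] at h h'
  · refine ⟨P.eq_of_abs_mul_sub_mul_le_one ?_, rfl⟩
    simpa only [sub_sub_sub_cancel_left] using hdist h' h
  · exact absurd (D.inv_mem_exceptionalOrdinates P hp hp₁ hk h h') hp₂
  · exact absurd (D.inv_mem_exceptionalOrdinates P hp hp₁ hk' h' h) hp₂
  · refine ⟨P.eq_of_abs_mul_sub_mul_le_one ?_, rfl⟩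
    simpa only [sub_sub_sub_cancel_right] using hdist h h'

theorem one_le_dfun_of_mem_region (P : RosenParams lam (α * lam)) {z : ℝ × ℝ}
    (hz : z ∈ region lam (α * lam) H) (hz₀ : z.1 ≠ 0) : 1 ≤ dfun lam α z.1 :=
  one_le_dfun P.lam_pos P.lam_sub_one_lt.le P.a_le_one hz₀ hz.1

theorem mapsTo_Tnat (P : RosenParams lam (α * lam)) (D : IsFiberHeight lam (α * lam) H) :
    MapsTo (Tnat lam α) (region lam (α * lam) H \ cross {0} ∅) (region lam (α * lam) H) := by
  rintro z ⟨hz, hzN⟩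
  have hz₀ : z.1 ≠ 0 := fun h ↦ hzN (.inl h)
  refine D.mem_region_of_invBranch_mem P (Tmap_mem_Ico P.lam_pos hz₀)
    (one_le_dfun_of_mem_region P hz hz₀) (sign_eq_one_or_neg_one hz₀) ?_
  rwa [invBranch_Tnat hz₀]

theorem injOn_Tnat (P : RosenParams lam (α * lam)) (D : IsFiberHeight lam (α * lam) H) :
    InjOn (Tnat lam α) (region lam (α * lam) H \ (cross {0} ∅ ∪ Tnat lam α ⁻¹'
      cross (exceptionalAbscissas lam (α * lam)) (exceptionalOrdinates lam))) := by
  rintro z ⟨hz, hzN⟩ z' ⟨hz', hzN'⟩ heq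
  have hz₀ : z.1 ≠ 0 := fun h ↦ hzN (.inl (.inl h))
  have hz₀' : z'.1 ≠ 0 := fun h ↦ hzN' (.inl (.inl h))
  obtain ⟨hd, hs⟩ := D.invBranch_mem_unique P (Tmap_mem_Ico P.lam_pos hz₀)
    (fun h ↦ hzN (.inr h)) (one_le_dfun_of_mem_region P hz hz₀)
    (one_le_dfun_of_mem_region P hz' hz₀') (sign_eq_one_or_neg_one hz₀)
    (sign_eq_one_or_neg_one hz₀') (by rwa [invBranch_Tnat hz₀])
    (by rwa [heq, invBranch_Tnat hz₀'])
  rw [← invBranch_Tnat (lam := lam) (α := α) hz₀, hd, hs, heq, invBranch_Tnat hz₀']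

theorem surjOn_Tnat (P : RosenParams lam (α * lam)) (D : IsFiberHeight lam (α * lam) H) :
    SurjOn (Tnat lam α) (region lam (α * lam) H \ cross {0} ∅) (region lam (α * lam) H \
      cross (exceptionalAbscissas lam (α * lam)) (exceptionalOrdinates lam)) := by
  rintro p ⟨hp, hpN⟩
  have hp₂ : p.2 ≠ 0 := fun h ↦ hpN (.inr (mem_preimage.2 (h ▸ zero_mem_exceptionalOrdinates lam)))
  obtain ⟨k, ε, hk, hε, hmem⟩ := D.exists_invBranch_mem P hp (fun h ↦ hpN (.inl h)) hp₂
  have hpos := P.a_pos.trans_le (P.le_add_mul_lam hp.1 hk)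
  exact ⟨_, ⟨hmem, fun h ↦ h.elim (invBranch_fst_ne_zero hε hpos) id⟩,
    Tnat_invBranch P.lam_pos hε hp.1 hpos⟩

theorem exists_null_bijOn_region (P : RosenParams lam (α * lam))
    (D : IsFiberHeight lam (α * lam) H) :
    ∃ N N' : Set (ℝ × ℝ), N ⊆ region lam (α * lam) H ∧ N' ⊆ region lam (α * lam) H ∧
      volume N = 0 ∧ volume N' = 0 ∧
      BijOn (Tnat lam α) (region lam (α * lam) H \ N) (region lam (α * lam) H \ N') :=
  have hA := countable_exceptionalAbscissas lam (α * lam)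
  have hO := countable_exceptionalOrdinates lam
  exists_null_bijOn (volume_cross_eq_zero (countable_singleton 0) countable_empty)
    (volume_cross_eq_zero hA hO) (volume_Tnat_preimage_cross_eq_zero hA hO)
    (D.mapsTo_Tnat P) (D.injOn_Tnat P) (D.surjOn_Tnat P)

end IsFiberHeight

section StepFunctions

variable {u K : ℕ → ℝ} {N m : ℕ} {b x : ℝ}

/-- The step function that takes the value `K m` between the breakpoints `u m` and `u (m + 1)`, and
`K N` from the last breakpoint `u N` on. -/
noncomputable def stepFun (u K : ℕ → ℝ) (N : ℕ) (x : ℝ) : ℝ :=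
  K (Nat.findGreatest (u · ≤ x) N)

theorem stepFun_eq (hu : MonotoneOn u (Iic N)) (hm : m ≤ N) (hx : u m ≤ x)
    (hx' : m < N → x < u (m + 1)) : stepFun u K N x = K m := by
  rw [stepFun, Nat.findGreatest_eq_iff.2 ⟨hm, fun _ ↦ hx, fun j hmj hjN hj ↦ ?_⟩]
  have hmN : m < N := hmj.trans_le hjN
  exact (hx' hmN).not_ge ((hu (mem_Iic.2 hmN) hjN hmj).trans hj)

theorem exists_lap (hx : u 0 ≤ x) : ∃ m ≤ N, u m ≤ x ∧ (m < N → x < u (m + 1)) :=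
  ⟨Nat.findGreatest (u · ≤ x) N, Nat.findGreatest_le N,
    Nat.findGreatest_spec (P := (u · ≤ x)) (Nat.zero_le N) hx,
    fun h ↦ not_le.1 (Nat.findGreatest_is_greatest (Nat.lt_succ_self _) h)⟩

theorem subgraph_stepFun (hu : MonotoneOn u (Iic N)) (hN : u N ≤ b) :
    {z : ℝ × ℝ | z.1 ∈ Ico (u 0) b ∧ z.2 ∈ Icc 0 (stepFun u K N z.1)} =
      (⋃ m ∈ Finset.range N, Ico (u m) (u (m + 1)) ×ˢ Icc 0 (K m)) ∪
        Ico (u N) b ×ˢ Icc 0 (K N) := by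
  ext ⟨x, y⟩
  simp only [mem_union, mem_iUnion₂, Finset.mem_range, mem_prod, mem_ofPred_eq]
  constructor
  · rintro ⟨hx, hy⟩
    obtain ⟨m, hmN, hmx, hxm⟩ := exists_lap (N := N) hx.1
    rw [stepFun_eq hu hmN hmx hxm] at hy
    rcases hmN.lt_or_eq with h | rfl
    · exact .inl ⟨m, h, ⟨hmx, hxm h⟩, hy⟩
    · exact .inr ⟨⟨hmx, hx.2⟩, hy⟩
  · rintro (⟨m, hm, hx, hy⟩ | ⟨hx, hy⟩)
    · rw [stepFun_eq hu hm.le hx.1 fun _ ↦ hx.2]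
      exact ⟨⟨(hu (mem_Iic.2 N.zero_le) (mem_Iic.2 hm.le) m.zero_le).trans hx.1,
        hx.2.trans_le ((hu (mem_Iic.2 hm) self_mem_Iic hm).trans hN)⟩, hy⟩
    · rw [stepFun_eq hu le_rfl hx.1 fun h ↦ absurd h (lt_irrefl N)]
      exact ⟨⟨(hu (mem_Iic.2 N.zero_le) self_mem_Iic N.zero_le).trans hx.1, hx.2⟩, hy⟩

theorem biUnion_range_two_mul_add_one {X : Type*} (S : ℕ → Set X) (h : ℕ) :
    ⋃ m ∈ Finset.range (2 * h + 1), S m = (⋃ n ∈ Finset.Icc 1 h, S (2 * (n - 1))) ∪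
      (⋃ n ∈ Finset.Icc 1 h, S (2 * (n - 1) + 1)) ∪ S (2 * h) := by
  ext x
  simp only [mem_union, mem_iUnion₂, Finset.mem_range, Finset.mem_Icc, exists_prop]
  constructor
  · rintro ⟨m, hm, hx⟩
    obtain ⟨n, rfl | rfl⟩ := m.even_or_odd'
    · rcases (show n ≤ h by omega).lt_or_eq with hn | rfl
      · exact .inl (.inl ⟨n + 1, by omega, hx⟩)
      · exact .inr hx
    · exact .inl (.inr ⟨n + 1, by omega, hx⟩)
  · rintro ((⟨n, hn, hx⟩ | ⟨n, hn, hx⟩) | hx)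
    exacts [⟨_, by omega, hx⟩, ⟨_, by omega, hx⟩, ⟨_, by omega, hx⟩]

theorem subgraph_stepFun_two_mul_add_one {h : ℕ} {s t A B : ℕ → ℝ}
    (hu : MonotoneOn u (Iic (2 * h + 1))) (hb : u (2 * h + 1) ≤ b)
    (hs : ∀ n ≤ h, s n = u (2 * n)) (ht : ∀ n ≤ h, t (n + 1) = u (2 * n + 1))
    (hA : ∀ n, A (n + 1) = K (2 * n)) (hB : ∀ n, B (n + 1) = K (2 * n + 1)) :
    {z : ℝ × ℝ | z.1 ∈ Ico (u 0) b ∧ z.2 ∈ Icc 0 (stepFun u K (2 * h + 1) z.1)} =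
      (⋃ n ∈ Finset.Icc 1 h, Ico (s (n - 1)) (t n) ×ˢ Icc 0 (A n)) ∪
      (⋃ n ∈ Finset.Icc 1 h, Ico (t n) (s n) ×ˢ Icc 0 (B n)) ∪
      Ico (s h) (t (h + 1)) ×ˢ Icc 0 (A (h + 1)) ∪
      Ico (t (h + 1)) b ×ˢ Icc 0 (B (h + 1)) := by
  rw [subgraph_stepFun hu hb,
    biUnion_range_two_mul_add_one fun m ↦ Ico (u m) (u (m + 1)) ×ˢ Icc 0 (K m),
    hs h le_rfl, ht h le_rfl, hA, hB]
  congr 3 <;> refine iUnion₂_congr fun n hn ↦ ?_ <;>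
    obtain ⟨h₁, hn⟩ := Finset.mem_Icc.1 hn <;>
    obtain ⟨n, rfl⟩ := Nat.exists_eq_add_of_le' h₁ <;>
    rw [Nat.add_sub_cancel]
  · rw [hs n (by omega), ht n (by omega), hA]
  · rw [ht n (by omega), hs (n + 1) hn, hB, mul_add_one]

end StepFunctions

section HalfAngleSines

/-- The sine of `x` half angles, where the full angle is `π / q`. Integer multiples of the full
angle are the even values of `x`, and their midpoints the odd ones. -/
noncomputable def halfSin (q : ℕ) (x : ℝ) : ℝ := Real.sin (x * (Real.pi / (2 * q)))

variable {q m : ℕ} {lam x : ℝ}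

theorem halfSin_two_mul (q : ℕ) (x : ℝ) : halfSin q (2 * x) = Real.sin (x * Real.pi / q) := by
  rw [halfSin]
  congr 1
  ring

theorem halfSin_neg (q : ℕ) (x : ℝ) : halfSin q (-x) = -halfSin q x := by
  rw [halfSin, neg_mul, Real.sin_neg, halfSin]

theorem halfSin_zero (q : ℕ) : halfSin q 0 = 0 := by
  rw [halfSin, zero_mul, Real.sin_zero]

theorem halfSin_add_four (hlam : lam = 2 * Real.cos (Real.pi / q)) (x : ℝ) :
    halfSin q (x + 4) = lam * halfSin q (x + 2) - halfSin q x := by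
  have hangle : Real.pi / q = 2 * (Real.pi / (2 * q)) := by ring
  rw [hlam, hangle, eq_sub_iff_add_eq]
  simp only [halfSin]
  rw [mul_right_comm, Real.two_mul_sin_mul_cos, add_comm]
  congr 2 <;> ring

theorem halfSin_two_mul_sub (hq : q ≠ 0) (x : ℝ) : halfSin q (2 * q - x) = halfSin q x := by
  have hangle : (2 * q - x) * (Real.pi / (2 * q)) = Real.pi - x * (Real.pi / (2 * q)) := by
    field_simp
  rw [halfSin, hangle, Real.sin_pi_sub, halfSin]

theorem halfSin_pos (hx : 0 < x) (hxq : x < 2 * q) : 0 < halfSin q x := by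
  have hq : (0 : ℝ) < 2 * q := hx.trans hxq
  refine Real.sin_pos_of_pos_of_lt_pi (mul_pos hx (div_pos Real.pi_pos hq)) ?_
  rw [mul_div_left_comm, mul_lt_iff_lt_one_right Real.pi_pos, div_lt_one hq]
  exact hxq

theorem halfSin_natCast_pos (hm : 0 < m) (hmq : m < 2 * q) : 0 < halfSin q m :=
  halfSin_pos (by exact_mod_cast hm) (by exact_mod_cast hmq)

theorem halfSin_le_halfSin_add_two (hq : q ≠ 0) (hx : -1 ≤ x) (hxq : x + 1 ≤ q) :
    halfSin q x ≤ halfSin q (x + 2) := by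
  have hφ : 0 ≤ Real.pi / (2 * q) := by positivity
  have hqφ : q * (Real.pi / (2 * q)) = Real.pi / 2 := by field_simp
  have hangle : 0 ≤ (x + 1) * (Real.pi / (2 * q)) := mul_nonneg (by linarith) hφ
  have hsin : 0 ≤ Real.sin (Real.pi / (2 * q)) := by
    have hq' : (1 : ℝ) ≤ q := by exact_mod_cast Nat.one_le_iff_ne_zero.2 hq
    exact Real.sin_nonneg_of_nonneg_of_le_pi hφ
      (div_le_self Real.pi_pos.le (by linarith))
  have hcos : 0 ≤ Real.cos ((x + 1) * (Real.pi / (2 * q))) :=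
    Real.cos_nonneg_of_neg_pi_div_two_le_of_le (by linarith [Real.pi_pos])
      ((mul_le_mul_of_nonneg_right hxq hφ).trans_eq hqφ)
  have hdiff : halfSin q (x + 2) - halfSin q x =
      2 * Real.sin (Real.pi / (2 * q)) * Real.cos ((x + 1) * (Real.pi / (2 * q))) := by
    rw [halfSin, halfSin, Real.sin_sub_sin]
    congr 2 <;> ring_nf
  rw [← sub_nonneg, hdiff]
  positivity

theorem halfSin_add_halfSin (q : ℕ) (x : ℝ) :
    halfSin q x + halfSin q (x + 2) = halfSin q (x + 1) * (2 * Real.cos (Real.pi / (2 * q))) := by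
  rw [halfSin, halfSin, halfSin, mul_left_comm, ← mul_assoc, Real.two_mul_sin_mul_cos]
  congr 2 <;> ring

/-- The heights of `Ω_α` over the consecutive laps of the partition, counted from `0`. -/
noncomputable def lapHeight (q m : ℕ) : ℝ := halfSin q (m + 1) / halfSin q (m + 3)

theorem lapHeight_two_mul (hq : 1 < q) (n : ℕ) :
    lapHeight q (2 * n) = (Real.sin (n * Real.pi / q) + Real.sin ((n + 1) * Real.pi / q)) /
      (Real.sin ((n + 1) * Real.pi / q) + Real.sin ((n + 2) * Real.pi / q)) := by
  have hq' : (1 : ℝ) < q := by exact_mod_cast hq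
  have hcos : 0 < Real.cos (Real.pi / (2 * q)) := by
    have hφ : 0 ≤ Real.pi / (2 * q) := by positivity
    exact Real.cos_pos_of_mem_Ioo ⟨by linarith [Real.pi_pos],
      div_lt_div_of_pos_left Real.pi_pos two_pos (by linarith)⟩
  simp only [← halfSin_two_mul, mul_add, mul_one]
  rw [halfSin_add_halfSin, show 2 * (n : ℝ) + 2 * 2 = 2 * n + 2 + 2 by ring, halfSin_add_halfSin,
    mul_div_mul_right _ _ (by positivity), lapHeight]
  push_cast
  ring_nf

theorem lapHeight_two_mul_add_one (q n : ℕ) : lapHeight q (2 * n + 1) =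
    Real.sin ((n + 1) * Real.pi / q) / Real.sin ((n + 2) * Real.pi / q) := by
  rw [lapHeight, ← halfSin_two_mul, ← halfSin_two_mul]
  congr 2 <;> push_cast <;> ring

theorem lapHeight_mem_Icc (hm : m + 2 ≤ q) : lapHeight q m ∈ Icc 0 1 := by
  have hm' : (m : ℝ) + 1 + 1 ≤ q := by exact_mod_cast hm
  have hnum : 0 < halfSin q (m + 1) :=
    mod_cast halfSin_natCast_pos (m := m + 1) (by omega) (by omega)
  have hle := halfSin_le_halfSin_add_two (by omega) (by linarith [m.cast_nonneg (α := ℝ)]) hm'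
  rw [show (m : ℝ) + 1 + 2 = m + 3 by ring] at hle
  exact ⟨div_nonneg hnum.le (hnum.le.trans hle), (div_le_one (hnum.trans_le hle)).2 hle⟩

theorem lam_add_one_mul_lapHeight_zero (hlam : lam = 2 * Real.cos (Real.pi / q)) (hq : 1 < q) :
    (lam + 1) * lapHeight q 0 = 1 := by
  have hpos : 0 < halfSin q 3 := mod_cast halfSin_natCast_pos (m := 3) (by omega) (by omega)
  have hrec := halfSin_add_four hlam (-1)
  rw [halfSin_neg, show (-1 : ℝ) + 4 = 3 by norm_num, show (-1 : ℝ) + 2 = 1 by norm_num] at hrec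
  rw [lapHeight, Nat.cast_zero, zero_add, zero_add, mul_div_assoc', div_eq_one_iff_eq hpos.ne']
  linarith

theorem lam_mul_lapHeight_one (hlam : lam = 2 * Real.cos (Real.pi / q)) (hq : 2 < q) :
    lam * lapHeight q 1 = 1 := by
  have hpos : 0 < halfSin q 4 := mod_cast halfSin_natCast_pos (m := 4) (by omega) (by omega)
  have hrec := halfSin_add_four hlam 0
  rw [halfSin_zero, zero_add, zero_add, sub_zero] at hrec
  rw [lapHeight, Nat.cast_one, one_add_one_eq_two, show (1 : ℝ) + 3 = 4 by norm_num,
    mul_div_assoc', div_eq_one_iff_eq hpos.ne', hrec]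

theorem lapHeight_add_two_mul (hlam : lam = 2 * Real.cos (Real.pi / q)) (hm : m + 5 < 2 * q) :
    lapHeight q (m + 2) * (lam - lapHeight q m) = 1 := by
  have h₃ : 0 < halfSin q (m + 3) :=
    mod_cast halfSin_natCast_pos (m := m + 3) (by omega) (by omega)
  have h₅ : 0 < halfSin q (m + 5) := mod_cast halfSin_natCast_pos (m := m + 5) (by omega) hm
  have hrec := halfSin_add_four hlam (m + 1)
  rw [show (m : ℝ) + 1 + 4 = m + 5 by ring, show (m : ℝ) + 1 + 2 = m + 3 by ring] at hrec
  rw [lapHeight, lapHeight, show ((m + 2 : ℕ) : ℝ) + 1 = m + 3 by push_cast; ring,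
    show ((m + 2 : ℕ) : ℝ) + 3 = m + 5 by push_cast; ring]
  field_simp
  linarith

theorem lapHeight_eq_one (hm : q = m + 2) : lapHeight q m = 1 := by
  have hm' : (q : ℝ) = m + 2 := by exact_mod_cast hm
  have hpos : 0 < halfSin q (m + 3) :=
    mod_cast halfSin_natCast_pos (m := m + 3) (by omega) (by omega)
  rw [lapHeight, div_eq_one_iff_eq hpos.ne', ← halfSin_two_mul_sub (by omega), hm']
  ring_nf

theorem lapHeight_eq_half (hlam : lam = 2 * Real.cos (Real.pi / q)) (hm : q = m + 3) :
    lapHeight q m = lam / 2 := by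
  have hm' : (q : ℝ) = m + 3 := by exact_mod_cast hm
  have hpos : 0 < halfSin q (m + 3) :=
    mod_cast halfSin_natCast_pos (m := m + 3) (by omega) (by omega)
  have hrec := halfSin_add_four hlam (m + 1)
  have hrefl := halfSin_two_mul_sub (q := q) (by omega) (m + 1)
  rw [show 2 * (q : ℝ) - (m + 1) = m + 1 + 4 by linarith] at hrefl
  rw [hrefl, show (m : ℝ) + 1 + 2 = m + 3 by ring] at hrec
  rw [lapHeight, div_eq_iff hpos.ne']
  linarith

theorem lapHeight_eq_lam_sub_one (hlam : lam = 2 * Real.cos (Real.pi / q)) (hm : q = m + 4) :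
    lapHeight q m = lam - 1 := by
  have h := lapHeight_add_two_mul (m := m) hlam (by omega)
  rw [lapHeight_eq_one hm, one_mul] at h
  linarith

end HalfAngleSines

section LapEndpoints

/-- The left endpoints of the laps of the partition. The even ones form the orbit of `a - lam` and
the odd ones the orbit of `a⁻¹ - lam` under `negBranch lam`, interlaced. -/
noncomputable def lapEndpoint (lam a : ℝ) : ℕ → ℝ
  | 0 => a - lam
  | 1 => a⁻¹ - lam
  | m + 2 => negBranch lam (lapEndpoint lam a m)

/-- The denominators of the orbit of `c - lam` under `negBranch lam`, where
`lam = 2 * cos (π / q)`. -/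
noncomputable def orbitDenom (q : ℕ) (c : ℝ) (n : ℕ) : ℝ :=
  halfSin q (2 * n + 2) - c * halfSin q (2 * n)

variable {q n : ℕ} {lam c : ℝ}

theorem lapEndpoint_two_mul (lam a : ℝ) (n : ℕ) :
    lapEndpoint lam a (2 * n) = (negBranch lam)^[n] (a - lam) := by
  induction n with
  | zero => rfl
  | succ n ih => rw [Function.iterate_succ_apply', ← ih, mul_add_one, lapEndpoint]

theorem lapEndpoint_two_mul_add_one (lam a : ℝ) (n : ℕ) :
    lapEndpoint lam a (2 * n + 1) = (negBranch lam)^[n] (a⁻¹ - lam) := by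
  induction n with
  | zero => rfl
  | succ n ih => rw [Function.iterate_succ_apply', ← ih, mul_add_one, add_right_comm, lapEndpoint]

theorem orbitDenom_zero (q : ℕ) (c : ℝ) : orbitDenom q c 0 = halfSin q 2 := by
  rw [orbitDenom, Nat.cast_zero, mul_zero, halfSin_zero, mul_zero, sub_zero, zero_add]

theorem orbitDenom_add_two (hlam : lam = 2 * Real.cos (Real.pi / q)) (c : ℝ) (n : ℕ) :
    orbitDenom q c (n + 2) = lam * orbitDenom q c (n + 1) - orbitDenom q c n := by
  have h₁ := halfSin_add_four hlam (2 * n + 2)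
  have h₂ := halfSin_add_four hlam (2 * n)
  simp only [orbitDenom]
  push_cast
  ring_nf at h₁ h₂ ⊢
  rw [h₁, h₂]
  ring

theorem orbitDenom_pos (hlam : lam = 2 * Real.cos (Real.pi / q)) (hc₀ : 0 < c)
    (hc : c * (lam - 1) < 1) (hn : 2 * n + 3 ≤ q) : 0 < orbitDenom q c n := by
  have hn' : 2 * (n : ℝ) + 2 + 1 ≤ q := by exact_mod_cast hn
  have hpos : 0 < halfSin q (2 * n + 2) :=
    mod_cast halfSin_natCast_pos (m := 2 * n + 2) (by omega) (by omega)
  have hmono := halfSin_le_halfSin_add_two (q := q) (by omega)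
    (by linarith [n.cast_nonneg (α := ℝ)]) hn'
  have hrec := halfSin_add_four hlam (2 * n)
  rw [show 2 * (n : ℝ) + 2 + 2 = 2 * n + 4 by ring, hrec] at hmono
  have hle : halfSin q (2 * n) ≤ (lam - 1) * halfSin q (2 * n + 2) := by linarith
  rw [orbitDenom, sub_pos]
  calc c * halfSin q (2 * n) ≤ c * ((lam - 1) * halfSin q (2 * n + 2)) :=
        mul_le_mul_of_nonneg_left hle hc₀.le
    _ = c * (lam - 1) * halfSin q (2 * n + 2) := (mul_assoc _ _ _).symm
    _ < halfSin q (2 * n + 2) := mul_lt_of_lt_one_left hpos hc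

theorem iterate_negBranch (hlam : lam = 2 * Real.cos (Real.pi / q)) (hc₀ : 0 < c)
    (hc : c * (lam - 1) < 1) (hn : 2 * n + 3 ≤ q) :
    (negBranch lam)^[n] (c - lam) = -(orbitDenom q c (n + 1) / orbitDenom q c n) := by
  induction n with
  | zero =>
    have hpos := orbitDenom_pos hlam hc₀ hc hn
    have hrec := halfSin_add_four hlam 0
    rw [halfSin_zero, zero_add, zero_add, sub_zero] at hrec
    rw [Function.iterate_zero_apply, zero_add, ← neg_eq_iff_eq_neg, eq_div_iff hpos.ne',
      orbitDenom_zero, orbitDenom, Nat.cast_one, mul_one, show (2 : ℝ) + 2 = 4 by norm_num, hrec]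
    ring
  | succ n ih =>
    have hpos := orbitDenom_pos hlam hc₀ hc hn
    rw [Function.iterate_succ_apply', ih (by omega), negBranch, inv_neg, neg_neg, inv_div,
      orbitDenom_add_two hlam]
    field_simp
    ring

theorem iterate_negBranch_neg (hlam : lam = 2 * Real.cos (Real.pi / q)) (hc₀ : 0 < c)
    (hc : c * (lam - 1) < 1) (hn : 2 * n + 5 ≤ q) : (negBranch lam)^[n] (c - lam) < 0 := by
  rw [iterate_negBranch hlam hc₀ hc (by omega), neg_lt_zero]
  exact div_pos (orbitDenom_pos hlam hc₀ hc (by omega)) (orbitDenom_pos hlam hc₀ hc (by omega))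

theorem iterate_negBranch_eq_finalEndpoint (hlam : lam = 2 * Real.cos (Real.pi / q)) (hc₀ : 0 < c)
    (hc : c * (lam - 1) < 1) (hn : q = 2 * n + 3) :
    (negBranch lam)^[n] (c - lam) = finalEndpoint lam c := by
  have hn' : (q : ℝ) = 2 * n + 3 := by exact_mod_cast hn
  have hpos : 0 < halfSin q (2 * n + 2) :=
    mod_cast halfSin_natCast_pos (m := 2 * n + 2) (by omega) (by omega)
  have hrefl := halfSin_two_mul_sub (q := q) (by omega) (2 * n + 2)
  have hrec := halfSin_add_four hlam (2 * n)
  rw [show 2 * (q : ℝ) - (2 * n + 2) = 2 * n + 4 by linarith] at hrefl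
  have h₁ : orbitDenom q c (n + 1) = (1 - c) * halfSin q (2 * n + 2) := by
    rw [orbitDenom, Nat.cast_add_one, mul_add_one, add_assoc, show (2 : ℝ) + 2 = 4 by norm_num,
      hrefl]
    ring
  have h₂ : orbitDenom q c n = (1 - (lam - 1) * c) * halfSin q (2 * n + 2) := by
    rw [orbitDenom, show halfSin q (2 * n) = (lam - 1) * halfSin q (2 * n + 2) by linarith]
    ring
  rw [iterate_negBranch hlam hc₀ hc hn.ge, h₁, h₂, mul_div_mul_right _ _ hpos.ne', ← neg_div,
    neg_sub, finalEndpoint]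

theorem strictMonoOn_negBranch (lam : ℝ) : StrictMonoOn (negBranch lam) (Iio 0) :=
  fun _ _ _ hy hxy ↦ sub_lt_sub_right (neg_lt_neg ((inv_lt_inv_of_neg hy (hxy.trans hy)).2 hxy)) lam

theorem two_mul_cos_pi_div_pos (hq : 2 < q) : 0 < 2 * Real.cos (Real.pi / q) := by
  have hq' : (2 : ℝ) < q := by exact_mod_cast hq
  have hangle : 0 < Real.pi / q := div_pos Real.pi_pos (by linarith)
  have hangle' : Real.pi / q < Real.pi / 2 := div_lt_div_of_pos_left Real.pi_pos two_pos hq'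
  exact mul_pos two_pos (Real.cos_pos_of_mem_Ioo ⟨by linarith, hangle'⟩)

namespace RosenParams

variable {h m : ℕ} {a α x : ℝ}

theorem mul_lam_sub_one_lt_one (P : RosenParams lam a) : a * (lam - 1) < 1 := by
  linarith [P.one_sub_mul_pos]

theorem inv_mul_lam_sub_one_lt_one (P : RosenParams lam a) : a⁻¹ * (lam - 1) < 1 :=
  (inv_mul_lt_one₀ P.a_pos).2 P.lam_sub_one_lt

theorem lapEndpoint_neg (P : RosenParams lam a) (hlam : lam = 2 * Real.cos (Real.pi / q))
    (hq : q = 2 * h + 3) (hm : m < 2 * h) : lapEndpoint lam a m < 0 := by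
  obtain ⟨n, rfl | rfl⟩ := m.even_or_odd'
  · rw [lapEndpoint_two_mul]
    exact iterate_negBranch_neg hlam P.a_pos P.mul_lam_sub_one_lt_one (by omega)
  · rw [lapEndpoint_two_mul_add_one]
    exact iterate_negBranch_neg hlam (inv_pos.2 P.a_pos) P.inv_mul_lam_sub_one_lt_one (by omega)

theorem lapEndpoint_eq_finalEndpoint (P : RosenParams lam a)
    (hlam : lam = 2 * Real.cos (Real.pi / q)) (hq : q = 2 * h + 3) :
    lapEndpoint lam a (2 * h) = finalEndpoint lam a := by
  rw [lapEndpoint_two_mul]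
  exact iterate_negBranch_eq_finalEndpoint hlam P.a_pos P.mul_lam_sub_one_lt_one hq

theorem lapEndpoint_eq_finalEndpoint_inv (P : RosenParams lam a)
    (hlam : lam = 2 * Real.cos (Real.pi / q)) (hq : q = 2 * h + 3) :
    lapEndpoint lam a (2 * h + 1) = finalEndpoint lam a⁻¹ := by
  rw [lapEndpoint_two_mul_add_one]
  exact iterate_negBranch_eq_finalEndpoint hlam (inv_pos.2 P.a_pos) P.inv_mul_lam_sub_one_lt_one hq

theorem lapEndpoint_le_succ (P : RosenParams lam a) (hlam : lam = 2 * Real.cos (Real.pi / q))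
    (hq : q = 2 * h + 3) :
    ∀ {m : ℕ}, m ≤ 2 * h → lapEndpoint lam a m ≤ lapEndpoint lam a (m + 1)
  | 0, _ => sub_le_sub_right (P.a_le_one.trans P.one_le_inv) lam
  | 1, _ => by
    have hpos : 0 < lam - a := by linarith [P.one_lt_lam, P.a_le_one]
    have hinv : a⁻¹ ≤ (lam - a)⁻¹ := inv_anti₀ hpos (by linarith [P.lam_lt_two_mul])
    rw [lapEndpoint, lapEndpoint, lapEndpoint, negBranch, ← inv_neg, neg_sub]
    exact sub_le_sub_right hinv lam
  | m + 2, hm => (strictMonoOn_negBranch lam).monotoneOn (P.lapEndpoint_neg hlam hq (by omega))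
      (P.lapEndpoint_neg hlam hq (by omega)) (P.lapEndpoint_le_succ hlam hq (by omega))

theorem monotoneOn_lapEndpoint (P : RosenParams lam a)
    (hlam : lam = 2 * Real.cos (Real.pi / q)) (hq : q = 2 * h + 3) :
    MonotoneOn (lapEndpoint lam a) (Iic (2 * h + 1)) :=
  monotoneOn_of_le_succ ordConnected_Iic fun _ _ _ hm ↦
    P.lapEndpoint_le_succ hlam hq (Nat.le_of_succ_le_succ hm)

theorem lapEndpoint_lt (P : RosenParams lam a) (hlam : lam = 2 * Real.cos (Real.pi / q))
    (hq : q = 2 * h + 3) : lapEndpoint lam a (2 * h + 1) < a :=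
  (P.lapEndpoint_eq_finalEndpoint_inv hlam hq).trans_lt P.finalEndpoint_inv_lt

theorem neg_inv_add_lt_finalEndpoint (P : RosenParams lam a) :
    -(a + lam)⁻¹ < finalEndpoint lam a :=
  (P.neg_inv_add_lt_finalEndpoint_iff P.a_pos).2
    (P.finalEndpoint_inv_lt.trans_le (P.a_le_one.trans P.one_le_inv))

theorem lapEndpoint_le_neg_inv_add (P : RosenParams lam a)
    (hlam : lam = 2 * Real.cos (Real.pi / q)) (hq : q = 2 * h + 3) (hm : m + 1 = 2 * h) :
    lapEndpoint lam a m ≤ -(a + lam)⁻¹ := by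
  have hneg : -(a + lam)⁻¹ < 0 := P.neg_inv_add_lt_finalEndpoint.trans_le P.finalEndpoint_nonpos
  rw [← (strictMonoOn_negBranch lam).le_iff_le (P.lapEndpoint_neg hlam hq (by omega)) hneg,
    negBranch_neg_inv_add, ← lapEndpoint, Nat.succ_eq_add_one, hm]
  exact (P.lapEndpoint_lt hlam hq).le

theorem stepFun_negBranch_mul (P : RosenParams lam a)
    (hlam : lam = 2 * Real.cos (Real.pi / q)) (hq : q = 2 * h + 3)
    (hx : x ∈ Ico (a - lam) (-(a + lam)⁻¹)) :
    stepFun (lapEndpoint lam a) (lapHeight q) (2 * h + 1) (negBranch lam x) *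
      (lam - stepFun (lapEndpoint lam a) (lapHeight q) (2 * h + 1) x) = 1 := by
  have hu := P.monotoneOn_lapEndpoint hlam hq
  have hxfin : x < finalEndpoint lam a := hx.2.trans P.neg_inv_add_lt_finalEndpoint
  have hx₀ : x < 0 := hxfin.trans_le P.finalEndpoint_nonpos
  obtain ⟨m, hm, hmx, hxm⟩ := exists_lap (N := 2 * h + 1) (u := lapEndpoint lam a) hx.1
  have hmh : m < 2 * h := by
    by_contra! hle
    have := (hu (mem_Iic.2 (by omega)) (mem_Iic.2 hm) hle).trans hmx
    rw [P.lapEndpoint_eq_finalEndpoint hlam hq] at this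
    exact this.not_gt hxfin
  have hnext : stepFun (lapEndpoint lam a) (lapHeight q) (2 * h + 1) (negBranch lam x) =
      lapHeight q (m + 2) :=
    stepFun_eq hu (by omega)
      ((strictMonoOn_negBranch lam).monotoneOn (P.lapEndpoint_neg hlam hq hmh) hx₀ hmx)
      fun hm' ↦ strictMonoOn_negBranch lam hx₀ (P.lapEndpoint_neg hlam hq (by omega))
        (hxm (by omega))
  rw [hnext, stepFun_eq hu hm hmx hxm]
  exact lapHeight_add_two_mul hlam (by omega)

theorem isFiberHeight_stepFun (P : RosenParams lam a)
    (hlam : lam = 2 * Real.cos (Real.pi / q)) (hq : q = 2 * h + 3) (hh : 1 ≤ h) :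
    IsFiberHeight lam a (stepFun (lapEndpoint lam a) (lapHeight q) (2 * h + 1)) := by
  have hu := P.monotoneOn_lapEndpoint hlam hq
  have hleft := P.lapEndpoint_eq_finalEndpoint hlam hq
  have hright := P.lapEndpoint_eq_finalEndpoint_inv hlam hq
  refine ⟨fun x hx ↦ ?_, fun x hx ↦ ?_, fun x hx ↦ ?_, fun x hx ↦ ?_, fun x hx ↦ ?_,
    fun x hx ↦ ?_, fun x hx ↦ P.stepFun_negBranch_mul hlam hq hx⟩
  · obtain ⟨m, hm, hmx, hxm⟩ := exists_lap (N := 2 * h + 1) (u := lapEndpoint lam a) hx.1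
    rw [stepFun_eq hu hm hmx hxm]
    exact lapHeight_mem_Icc (by omega)
  · rw [stepFun_eq hu (Nat.zero_le _) hx.1 fun _ ↦ hx.2]
    exact lam_add_one_mul_lapHeight_zero hlam (by omega)
  · rw [stepFun_eq hu (m := 1) (by omega) hx.1 fun _ ↦ hx.2]
    exact lam_mul_lapHeight_one hlam (by omega)
  · have hm : 2 * h - 1 + 1 = 2 * h := by omega
    rw [stepFun_eq hu (m := 2 * h - 1) (by omega)
      ((P.lapEndpoint_le_neg_inv_add hlam hq hm).trans hx.1) fun _ ↦ by
        rw [hm, hleft]; exact hx.2]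
    exact lapHeight_eq_lam_sub_one hlam (by omega)
  · rw [stepFun_eq hu (m := 2 * h) (by omega) (hleft.trans_le hx.1) fun _ ↦ by
      rw [hright]; exact hx.2]
    exact lapHeight_eq_half hlam hq
  · rw [stepFun_eq hu le_rfl (hright.trans_le hx.1) fun hlt ↦ absurd hlt (lt_irrefl _)]
    exact lapHeight_eq_one hq

theorem Tmap_of_neg (P : RosenParams lam (α * lam)) (hx : x < 0) (hle : α * lam - lam ≤ x)
    (hlt : negBranch lam x < α * lam) : Tmap lam α x = negBranch lam x := by
  have habs : |x⁻¹| = (-x)⁻¹ := by rw [abs_of_neg (inv_lt_zero.2 hx), inv_neg]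
  have hinv : 1 ≤ (-x)⁻¹ :=
    (one_le_inv₀ (neg_pos.2 hx)).2 (by linarith [P.lam_sub_one_lt])
  rw [negBranch, ← inv_neg] at hlt ⊢
  have hd : dfun lam α x = 1 := by
    rw [dfun_eq_iff P.lam_pos, habs, Int.cast_one, one_mul]
    exact ⟨by linarith [P.a_le_one], hlt⟩
  rw [Tmap_of_ne_zero hx.ne, hd, habs, Int.cast_one, one_mul]

theorem Tmap_right (P : RosenParams lam (α * lam)) :
    Tmap lam α (α * lam) = lapEndpoint lam (α * lam) 1 := by
  have hd : dfun lam α (α * lam) = 1 := by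
    rw [dfun_eq_iff P.lam_pos, abs_of_pos (inv_pos.2 P.a_pos), Int.cast_one, one_mul]
    exact ⟨sub_le_sub_right (P.a_le_one.trans P.one_le_inv) _, by linarith [P.inv_lt_add]⟩
  rw [Tmap_of_ne_zero P.a_pos.ne', hd, abs_of_pos (inv_pos.2 P.a_pos), Int.cast_one, one_mul,
    lapEndpoint]

theorem Tmap_lapEndpoint (P : RosenParams lam (α * lam))
    (hlam : lam = 2 * Real.cos (Real.pi / q)) (hq : q = 2 * h + 3) (hm : m < 2 * h) :
    Tmap lam α (lapEndpoint lam (α * lam) m) = lapEndpoint lam (α * lam) (m + 2) := by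
  have hu := P.monotoneOn_lapEndpoint hlam hq
  refine P.Tmap_of_neg (P.lapEndpoint_neg hlam hq hm)
    (hu (mem_Iic.2 (Nat.zero_le _)) (mem_Iic.2 (by omega)) m.zero_le) ?_
  calc lapEndpoint lam (α * lam) (m + 2) ≤ lapEndpoint lam (α * lam) (2 * h + 1) :=
        hu (mem_Iic.2 (by omega)) self_mem_Iic (by omega)
    _ < α * lam := P.lapEndpoint_lt hlam hq

theorem iterate_Tmap_lapEndpoint (P : RosenParams lam (α * lam))
    (hlam : lam = 2 * Real.cos (Real.pi / q)) (hq : q = 2 * h + 3) (hm : m + 2 * n ≤ 2 * h + 1) :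
    (Tmap lam α)^[n] (lapEndpoint lam (α * lam) m) = lapEndpoint lam (α * lam) (m + 2 * n) := by
  induction n with
  | zero => rfl
  | succ n ih =>
    rw [Function.iterate_succ_apply', ih (by omega), P.Tmap_lapEndpoint hlam hq (by omega),
      mul_add_one, add_assoc]

theorem iterate_Tmap_left (P : RosenParams lam (α * lam))
    (hlam : lam = 2 * Real.cos (Real.pi / q)) (hq : q = 2 * h + 3) (hn : n ≤ h) :
    (Tmap lam α)^[n] ((α - 1) * lam) = lapEndpoint lam (α * lam) (2 * n) := by
  have hiter := P.iterate_Tmap_lapEndpoint (m := 0) (n := n) hlam hq (by omega)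
  rwa [lapEndpoint, ← sub_one_mul, zero_add] at hiter

theorem iterate_succ_Tmap_right (P : RosenParams lam (α * lam))
    (hlam : lam = 2 * Real.cos (Real.pi / q)) (hq : q = 2 * h + 3) (hn : n ≤ h) :
    (Tmap lam α)^[n + 1] (α * lam) = lapEndpoint lam (α * lam) (2 * n + 1) := by
  rw [Function.iterate_succ_apply, P.Tmap_right, add_comm (2 * n)]
  exact P.iterate_Tmap_lapEndpoint hlam hq (by omega)

theorem of_root_lt (hlam : lam = 2 * Real.cos (Real.pi / q)) (hq : 4 ≤ q)
    (ha : (lam - 2 + Real.sqrt (lam ^ 2 - 4 * lam + 8)) / 2 < a) (ha₁ : a ≤ 1) :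
    RosenParams lam a := by
  have hq' : (4 : ℝ) ≤ q := by exact_mod_cast hq
  have hangle : 0 < Real.pi / q := div_pos Real.pi_pos (by linarith)
  have hangle' : Real.pi / q ≤ Real.pi / 4 :=
    div_le_div_of_nonneg_left Real.pi_pos.le four_pos hq'
  have hlam₀ : 0 < lam := (two_mul_cos_pi_div_pos (by omega)).trans_eq hlam.symm
  have hcos_two : 0 ≤ Real.cos (2 * (Real.pi / q)) :=
    Real.cos_nonneg_of_neg_pi_div_two_le_of_le (by linarith) (by linarith)
  have hcos_lt : Real.cos (Real.pi / q) < 1 :=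
    Real.cos_zero ▸ Real.cos_lt_cos_of_nonneg_of_le_pi le_rfl (by linarith) hangle
  have hlam₂ : lam < 2 := by linarith
  have hroot : 2 - lam < Real.sqrt (lam ^ 2 - 4 * lam + 8) := Real.lt_sqrt_of_sq_lt (by linarith)
  have hsqrt : lam ^ 2 - 4 * lam + 8 < (2 * a + 2 - lam) ^ 2 :=
    Real.lt_sq_of_sqrt_lt (by linarith)
  refine ⟨hlam₀, ?_, hlam₂, by linarith, ha₁, by linarith⟩
  rw [hlam, mul_pow, Real.cos_sq]
  linarith

end RosenParams

end LapEndpoints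

/-- Theorem 2.9: for odd `q = 2h+3` and `ρ/λ < α ≤ 1/λ`, the natural extension map `𝒯_α`
is a bijection of `Ω_α` off of a set of two-dimensional Lebesgue measure zero. -/
theorem stmt11 (h q : ℕ) (hh : 1 ≤ h) (hq : q = 2 * h + 3) (lam α ρ : ℝ)
    (hlam : lam = 2 * Real.cos (Real.pi / q))
    (hρ : ρ = (lam - 2 + Real.sqrt (lam ^ 2 - 4 * lam + 8)) / 2)
    (hα1 : ρ / lam < α) (hα2 : α ≤ 1 / lam)
    (ℓ r : ℕ → ℝ)
    (hℓ : ∀ n, ℓ n = (Tmap lam α)^[n] ((α - 1) * lam))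
    (hr : ∀ n, r n = (Tmap lam α)^[n] (α * lam))
    (Hodd Heven : ℕ → ℝ)
    (hHodd : ∀ n : ℕ, Hodd n =
      (Real.sin (((n : ℝ) - 1) * Real.pi / q) + Real.sin (n * Real.pi / q))
        / (Real.sin (n * Real.pi / q) + Real.sin (((n : ℝ) + 1) * Real.pi / q)))
    (hHeven : ∀ n : ℕ, Heven n =
      Real.sin (n * Real.pi / q) / Real.sin (((n : ℝ) + 1) * Real.pi / q))
    (Ω : Set (ℝ × ℝ))
    (hΩ : Ω = (⋃ n ∈ Finset.Icc 1 h, Ico (ℓ (n - 1)) (r n) ×ˢ Icc (0 : ℝ) (Hodd n))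
      ∪ (⋃ n ∈ Finset.Icc 1 h, Ico (r n) (ℓ n) ×ˢ Icc (0 : ℝ) (Heven n))
      ∪ Ico (ℓ h) (r (h + 1)) ×ˢ Icc (0 : ℝ) (Hodd (h + 1))
      ∪ Ico (r (h + 1)) (r 0) ×ˢ Icc (0 : ℝ) (Heven (h + 1))) :
    ∃ N N' : Set (ℝ × ℝ), N ⊆ Ω ∧ N' ⊆ Ω ∧ volume N = 0 ∧ volume N' = 0 ∧
      Set.BijOn (Tnat lam α) (Ω \ N) (Ω \ N') := by
  have hlam₀ : 0 < lam := (two_mul_cos_pi_div_pos (by omega)).trans_eq hlam.symm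
  have P : RosenParams lam (α * lam) := .of_root_lt hlam (by omega)
    (hρ ▸ (div_lt_iff₀ hlam₀).1 hα1) ((le_div_iff₀ hlam₀).1 hα2)
  have hℓ' (n : ℕ) (hn : n ≤ h) : ℓ n = lapEndpoint lam (α * lam) (2 * n) :=
    (hℓ n).trans (P.iterate_Tmap_left hlam hq hn)
  have hr' (n : ℕ) (hn : n ≤ h) : r (n + 1) = lapEndpoint lam (α * lam) (2 * n + 1) :=
    (hr _).trans (P.iterate_succ_Tmap_right hlam hq hn)
  have hHodd' (n : ℕ) : Hodd (n + 1) = lapHeight q (2 * n) := by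
    rw [hHodd, lapHeight_two_mul (by omega), Nat.cast_add_one, add_sub_cancel_right, add_assoc,
      one_add_one_eq_two]
  have hHeven' (n : ℕ) : Heven (n + 1) = lapHeight q (2 * n + 1) := by
    rw [hHeven, lapHeight_two_mul_add_one, Nat.cast_add_one, add_assoc, one_add_one_eq_two]
  have hΩ' : Ω = region lam (α * lam)
      (stepFun (lapEndpoint lam (α * lam)) (lapHeight q) (2 * h + 1)) := by
    rw [hΩ, hr 0]
    exact (subgraph_stepFun_two_mul_add_one (P.monotoneOn_lapEndpoint hlam hq)
      (P.lapEndpoint_lt hlam hq).le hℓ' hr' hHodd' hHeven').symm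
  rw [hΩ']
  exact (P.isFiberHeight_stepFun hlam hq hh).exists_null_bijOn_region P
end

section
/- Let q = 2h+3 with h ≥ 1, λ = 2cos(π/q), ρ = (λ − 2 + √(λ² − 4λ + 8))/2, and ρ/λ < α ≤ 1/λ. Then the integral of (1+xy)^{−2} over the natural extension region Ω_α (the union ⋃_{n=1}^{2h+2} J_n × [0,H_n] described below) equals log((1 + αλ)/√(2 − λ)) = log((1 + 2α·cos(π/q))/(2 sin(π/(2q)))); equivalently, the normalizing constant of the invariant probability density C_{q,α}/(1+xy)² on Ω_α is C_{q,α} = 1/log((1 + αλ)/√(2 − λ)). -/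
open Set MeasureTheory

/-!
Put `θ = π / q` and `s = αλ`. On the relevant stretch of both orbits `T_α` acts as the single branch
`x ↦ -1 / x - 2 cos θ`, which is the Riccati form of the recurrence
`f (n + 2) = 2 cos θ * f (n + 1) - f n`; so every endpoint of the intervals `J_i` other than
`r_0 = s` is a quotient `-f (n + 1) / f n` with `f` a combination of sines, `ℓ` and `r` differing
only in the coefficients. The heights are `H_m = sin (mθ / 2) / sin ((m + 2)θ / 2)`, for both
parities of `m`.

A box `[a, b) × [0, H]` contributes `log ((1 + b H) / (1 + a H))`. By the product formula for sines
each `1 + φ H` factors completely, each box ratio becomes a quotient of values of `f`, and the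
product over all boxes telescopes to `(1 + s) / (2 sin (θ / 2))`.
-/

namespace Rosen

open Real

section Integral

variable {a b x y H : ℝ}

theorem one_add_mul_pos_of_mem_Icc (h : 0 < 1 + a * H) (hx : a ≤ x) (hy : y ∈ Icc 0 H) :
    0 < 1 + x * y := by
  rcases le_total 0 x with hx₀ | hx₀
  · have := mul_nonneg hx₀ hy.1
    linarith
  · have h₁ : x * H ≤ x * y := mul_le_mul_of_nonpos_left hy.2 hx₀
    have h₂ : a * H ≤ x * H := mul_le_mul_of_nonneg_right hx (hy.1.trans hy.2)
    linarith

theorem integrableOn_Ico_prod_Icc (h : 0 < 1 + a * H) :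
    IntegrableOn (fun z : ℝ × ℝ ↦ 1 / (1 + z.1 * z.2) ^ 2) (Ico a b ×ˢ Icc 0 H) := by
  suffices IntegrableOn (fun z : ℝ × ℝ ↦ 1 / (1 + z.1 * z.2) ^ 2) (Icc a b ×ˢ Icc 0 H) from
    this.mono_set (prod_mono_left Ico_subset_Icc_self)
  refine ContinuousOn.integrableOn_compact (isCompact_Icc.prod isCompact_Icc) ?_
  refine ContinuousOn.div (by fun_prop) (by fun_prop) fun z hz ↦ ?_
  exact pow_ne_zero 2 (one_add_mul_pos_of_mem_Icc h hz.1.1 hz.2).ne'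

theorem setIntegral_Icc_one_div_one_add_mul_sq (hH : 0 ≤ H) (h : 0 < 1 + x * H) :
    ∫ y in Icc 0 H, 1 / (1 + x * y) ^ 2 = H / (1 + x * H) := by
  have hpos : ∀ y ∈ Icc 0 H, 0 < 1 + x * y := fun y ↦ one_add_mul_pos_of_mem_Icc h le_rfl
  have hderiv : ∀ y ∈ Icc 0 H, HasDerivAt (fun y ↦ y / (1 + x * y)) (1 / (1 + x * y) ^ 2) y := by
    intro y hy
    have hden : HasDerivAt (fun y ↦ 1 + x * y) x y := by
      simpa using ((hasDerivAt_id y).const_mul x).const_add 1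
    exact ((hasDerivAt_id' y).div hden (hpos y hy).ne').congr_deriv (by ring)
  rw [← uIcc_of_le hH] at hpos hderiv
  rw [integral_Icc_eq_integral_Ioc, ← intervalIntegral.integral_of_le hH,
    intervalIntegral.integral_eq_sub_of_hasDerivAt hderiv, zero_div, sub_zero]
  refine ContinuousOn.intervalIntegrable (ContinuousOn.div (by fun_prop) (by fun_prop) ?_)
  exact fun y hy ↦ pow_ne_zero 2 (hpos y hy).ne'

theorem setIntegral_Ico_prod_Icc (hH : 0 ≤ H) (hab : a ≤ b) (h : 0 < 1 + a * H) :
    ∫ z in Ico a b ×ˢ Icc 0 H, 1 / (1 + z.1 * z.2) ^ 2 = log ((1 + b * H) / (1 + a * H)) := by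
  have hpos : ∀ x, a ≤ x → 0 < 1 + x * H := fun x hx ↦
    one_add_mul_pos_of_mem_Icc h hx (right_mem_Icc.2 hH)
  have hderiv : ∀ x ∈ uIcc a b, HasDerivAt (fun x ↦ log (1 + x * H)) (H / (1 + x * H)) x := by
    intro x hx
    rw [uIcc_of_le hab] at hx
    have harg : HasDerivAt (fun x ↦ 1 + x * H) H x := by
      simpa using ((hasDerivAt_id x).mul_const H).const_add 1
    exact harg.log (hpos x hx.1).ne'
  have hcont : ContinuousOn (fun x ↦ H / (1 + x * H)) (uIcc a b) := by
    rw [uIcc_of_le hab]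
    exact ContinuousOn.div (by fun_prop) (by fun_prop) fun x hx ↦ (hpos x hx.1).ne'
  have hint := integrableOn_Ico_prod_Icc (b := b) h
  rw [Measure.volume_eq_prod] at hint ⊢
  calc ∫ z in Ico a b ×ˢ Icc 0 H, 1 / (1 + z.1 * z.2) ^ 2 ∂(volume.prod volume)
      = ∫ x in Ico a b, ∫ y in Icc 0 H, 1 / (1 + x * y) ^ 2 := setIntegral_prod _ hint
    _ = ∫ x in Ico a b, H / (1 + x * H) := setIntegral_congr_fun measurableSet_Ico fun x hx ↦
        setIntegral_Icc_one_div_one_add_mul_sq hH (hpos x hx.1)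
    _ = ∫ x in a..b, H / (1 + x * H) := by
        rw [integral_Ico_eq_integral_Ioc, intervalIntegral.integral_of_le hab]
    _ = log (1 + b * H) - log (1 + a * H) :=
        intervalIntegral.integral_eq_sub_of_hasDerivAt hderiv hcont.intervalIntegrable
    _ = log ((1 + b * H) / (1 + a * H)) := (log_div (hpos b hab).ne' h.ne').symm

/-- The region under a step function: over the `i`-th interval `[a i, a (i + 1))`, for `i < N`, it
has height `H (i + 1)`. The shift matches the numbering `J₁, J₂, …` of the intervals of `Ω_α`. -/
def staircase (a H : ℕ → ℝ) (N : ℕ) : Set (ℝ × ℝ) :=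
  ⋃ i ∈ Finset.range N, Ico (a i) (a (i + 1)) ×ˢ Icc 0 (H (i + 1))

theorem pairwiseDisjoint_Ico_succ {a : ℕ → ℝ} {N : ℕ} (ha : MonotoneOn a (Iic N)) :
    (Finset.range N : Set ℕ).PairwiseDisjoint fun i ↦ Ico (a i) (a (i + 1)) := by
  intro i hi j hj hij
  simp only [Finset.coe_range, mem_Iio] at hi hj
  wlog hlt : i < j generalizing i j
  · exact (this hij.symm hj hi (hij.lt_or_gt.resolve_left hlt)).symm
  · exact Ico_disjoint_Ico.2 <|
      (min_le_left _ _).trans <| (ha hi hj.le hlt).trans <| le_max_right _ _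

theorem setIntegral_staircase {a H : ℕ → ℝ} {N : ℕ} (ha : ∀ i < N, a i ≤ a (i + 1))
    (hH : ∀ i < N, 0 ≤ H (i + 1)) (hpos : ∀ i < N, 0 < 1 + a i * H (i + 1)) :
    ∫ z in staircase a H N, 1 / (1 + z.1 * z.2) ^ 2 =
      ∑ i ∈ Finset.range N, log ((1 + a (i + 1) * H (i + 1)) / (1 + a i * H (i + 1))) := by
  have hmono : MonotoneOn a (Iic N) :=
    monotoneOn_of_le_add_one ordConnected_Iic fun i _ _ hi ↦ ha i hi
  simp only [← Finset.mem_range] at ha hH hpos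
  calc ∫ z in staircase a H N, 1 / (1 + z.1 * z.2) ^ 2
      = ∑ i ∈ Finset.range N, ∫ z in Ico (a i) (a (i + 1)) ×ˢ Icc 0 (H (i + 1)),
          1 / (1 + z.1 * z.2) ^ 2 :=
        integral_biUnion_finset _ (fun _ _ ↦ measurableSet_Ico.prod measurableSet_Icc)
          ((pairwiseDisjoint_Ico_succ hmono).imp fun _ _ h ↦ disjoint_prod.2 (.inl h))
          fun i hi ↦ integrableOn_Ico_prod_Icc (hpos i hi)
    _ = _ := Finset.sum_congr rfl fun i hi ↦
        setIntegral_Ico_prod_Icc (hH i hi) (ha i hi) (hpos i hi)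

theorem staircase_succ (a H : ℕ → ℝ) (N : ℕ) :
    staircase a H (N + 1) = staircase a H N ∪ Ico (a N) (a (N + 1)) ×ˢ Icc 0 (H (N + 1)) := by
  rw [staircase, Finset.range_add_one, Finset.set_biUnion_insert, union_comm, staircase]

theorem staircase_two_mul (a H : ℕ → ℝ) (k : ℕ) :
    staircase a H (2 * k) =
      (⋃ n ∈ Finset.Icc 1 k, Ico (a (2 * (n - 1))) (a (2 * (n - 1) + 1)) ×ˢ Icc 0 (H (2 * n - 1)))
      ∪ ⋃ n ∈ Finset.Icc 1 k, Ico (a (2 * (n - 1) + 1)) (a (2 * n)) ×ˢ Icc 0 (H (2 * n)) := by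
  induction k with
  | zero => simp [staircase]
  | succ k ih =>
    rw [← Finset.insert_Icc_right_eq_Icc_add_one (by omega), Finset.set_biUnion_insert,
      Finset.set_biUnion_insert, mul_add_one, staircase_succ, staircase_succ, ih,
      union_union_union_comm, union_assoc, union_comm]
    rfl

end Integral

section Map

variable {lam α x : ℝ}

theorem Tmap_eq_abs_sub (hlam : 0 < lam) (hx : x ≠ 0) (h₁ : α * lam ≤ |1 / x|)
    (h₂ : |1 / x| < (α + 1) * lam) : Tmap lam α x = |1 / x| - lam := by
  have hdigit : dfun lam α x = 1 := by
    rw [← le_div_iff₀ hlam] at h₁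
    rw [← div_lt_iff₀ hlam] at h₂
    rw [dfun, ← div_div, abs_div, abs_of_pos hlam, Int.floor_eq_iff, Int.cast_one]
    constructor <;> linarith
  rw [Tmap, if_neg hx, hdigit, Int.cast_one, mul_one]

theorem le_neg_one_div_sub (hx : x < 0) (hlam : lam ≤ 2) : x ≤ -1 / x - lam := by
  have hquad : 0 ≤ x ^ 2 + lam * x + 1 := by nlinarith [sq_nonneg (x + 1)]
  rw [le_sub_iff_add_le, le_div_iff_of_neg hx]
  linarith

theorem Tmap_of_neg (hlam₀ : 0 < lam) (hlam₂ : lam ≤ 2) (hx : x < 0) (h₁ : (α - 1) * lam ≤ x)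
    (h₂ : -1 / x - lam < α * lam) : Tmap lam α x = -1 / x - lam := by
  have habs : |1 / x| = -1 / x := by rw [abs_of_neg (one_div_neg.2 hx), neg_div]
  have hle := le_neg_one_div_sub hx hlam₂
  rw [Tmap_eq_abs_sub hlam₀ hx.ne] <;> rw [habs] <;> linarith

theorem iterate_Tmap_of_neg {x : ℕ → ℝ} {N : ℕ} (hlam₀ : 0 < lam) (hlam₂ : lam ≤ 2)
    (hstep : ∀ n < N, x (n + 1) = -1 / x n - lam) (hneg : ∀ n < N, x n < 0)
    (hlow : (α - 1) * lam ≤ x 0) (hlt : ∀ n < N, x (n + 1) < α * lam) :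
    ∀ n ≤ N, (Tmap lam α)^[n] (x 0) = x n := by
  have hge : ∀ n ≤ N, (α - 1) * lam ≤ x n := by
    intro n hn
    induction n with
    | zero => exact hlow
    | succ n ih =>
      rw [hstep n hn]
      exact (ih (by omega)).trans (le_neg_one_div_sub (hneg n hn) hlam₂)
  intro n hn
  induction n with
  | zero => rfl
  | succ n ih =>
    rw [Function.iterate_succ_apply', ih (by omega), hstep n hn]
    exact Tmap_of_neg hlam₀ hlam₂ (hneg n hn) (hge n (by omega)) (hstep n hn ▸ hlt n hn)

end Map

section Sine

variable {θ c d c' d' : ℝ} {n : ℕ}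

theorem sin_mul_sin_add_sub_sin_add_mul_sin (x y θ : ℝ) :
    sin x * sin (y + θ) - sin (x + θ) * sin y = sin θ * sin (x - y) := by
  rw [sin_add, sin_add, sin_sub]
  ring

/-- The solutions `c * sin ((n + 1) * θ) - d * sin (n * θ)` of the recurrence
`f (n + 2) = 2 * cos θ * f (n + 1) - f n`, parametrized so that `d = 0` and `c = 0` give the two
shifts of `sin (n * θ)`. -/
noncomputable def sinComb (θ c d : ℝ) (n : ℕ) : ℝ :=
  c * sin ((n + 1) * θ) - d * sin (n * θ)

theorem sinComb_zero (θ c d : ℝ) : sinComb θ c d 0 = c * sin θ := by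
  simp [sinComb]

theorem sinComb_succ (θ c d : ℝ) (n : ℕ) :
    sinComb θ c d (n + 1) = sinComb θ (2 * cos θ * c - d) c n := by
  have hsin : sin ((n + 1 + 1) * θ) = 2 * cos θ * sin ((n + 1) * θ) - sin (n * θ) := by
    rw [show (n + 1 + 1) * θ = (n + 1) * θ + θ by ring, show n * θ = (n + 1) * θ - θ by ring]
    linarith [two_mul_sin_mul_cos ((n + 1) * θ) θ]
  rw [sinComb, sinComb]
  push_cast
  rw [hsin]
  ring

theorem sinComb_add_two (θ c d : ℝ) (n : ℕ) :
    sinComb θ c d (n + 2) = 2 * cos θ * sinComb θ c d (n + 1) - sinComb θ c d n := by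
  rw [sinComb_succ, sinComb_succ, sinComb_succ, sinComb, sinComb, sinComb]
  ring

theorem sinComb_mul_sin_add_sub (θ c d : ℝ) (n : ℕ) (y : ℝ) :
    sinComb θ c d n * sin (y + θ) - sinComb θ c d (n + 1) * sin y =
      sin θ * (c * sin ((n + 1) * θ - y) - d * sin (n * θ - y)) := by
  have h₁ := sin_mul_sin_add_sub_sin_add_mul_sin ((n + 1) * θ) y θ
  have h₀ := sin_mul_sin_add_sub_sin_add_mul_sin (n * θ) y θ
  rw [← add_one_mul] at h₀ h₁
  rw [sinComb, sinComb]
  push_cast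
  linear_combination c * h₁ - d * h₀

theorem sinComb_casoratian (θ c d c' d' : ℝ) (n : ℕ) :
    sinComb θ c d n * sinComb θ c' d' (n + 1) - sinComb θ c d (n + 1) * sinComb θ c' d' n =
      (c' * d - c * d') * sin θ ^ 2 := by
  have h₁ := sinComb_mul_sin_add_sub θ c d n ((n + 1) * θ)
  have h₀ := sinComb_mul_sin_add_sub θ c d n (n * θ)
  rw [← add_one_mul, sub_self, sin_zero, show n * θ - (n + 1) * θ = -θ by ring, sin_neg] at h₁
  rw [← add_one_mul, sub_self, sin_zero, show (n + 1) * θ - n * θ = θ by ring] at h₀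
  rw [sinComb.eq_1 θ c' d' (n + 1), sinComb.eq_1 θ c' d' n]
  push_cast
  linear_combination c' * h₁ - d' * h₀

theorem sinComb_pos (hθ : 0 < θ) (hn : (n + 1) * θ ≤ π / 2) (hd : 0 ≤ d) (hcd : d * cos θ < c) :
    0 < sinComb θ c d n := by
  have hle : θ ≤ (n + 1) * θ := le_mul_of_one_le_left hθ.le (by simp)
  have hsin : 0 < sin ((n + 1) * θ) := sin_pos_of_pos_of_lt_pi (by linarith) (by linarith [pi_pos])
  have hcos : 0 ≤ cos ((n + 1) * θ) := cos_nonneg_of_mem_Icc ⟨by linarith [pi_pos], hn⟩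
  have hsinθ : 0 < sin θ := sin_pos_of_pos_of_lt_pi hθ (by linarith [pi_pos])
  calc 0 < (c - d * cos θ) * sin ((n + 1) * θ) + d * (sin θ * cos ((n + 1) * θ)) :=
        add_pos_of_pos_of_nonneg (mul_pos (sub_pos.2 hcd) hsin)
          (mul_nonneg hd (mul_nonneg hsinθ.le hcos))
    _ = sinComb θ c d n := by
        rw [sinComb, show n * θ = (n + 1) * θ - θ by ring, sin_sub]
        ring

/-- The quotients `-f (n + 1) / f n` for `f = sinComb θ c d`. They form an orbit of the branch
`x ↦ -1 / x - 2 * cos θ` of `T_α`: with `s = α * λ`, the parameters `(1, s)` give `ℓ n` and `(s, 1)`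
give `r (n + 1)`. -/
noncomputable def orbitPoint (θ c d : ℝ) (n : ℕ) : ℝ :=
  -sinComb θ c d (n + 1) / sinComb θ c d n

theorem orbitPoint_zero (hθ : sin θ ≠ 0) (hc : c ≠ 0) :
    orbitPoint θ c d 0 = d / c - 2 * cos θ := by
  rw [orbitPoint, sinComb_succ, sinComb_zero, sinComb_zero]
  field_simp
  ring

theorem orbitPoint_succ_eq_neg_one_div_sub (h : sinComb θ c d (n + 1) ≠ 0) :
    orbitPoint θ c d (n + 1) = -1 / orbitPoint θ c d n - 2 * cos θ := by
  rw [orbitPoint, orbitPoint, sinComb_add_two]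
  field_simp
  ring

theorem orbitPoint_succ (θ c d : ℝ) (n : ℕ) :
    orbitPoint θ c d (n + 1) = orbitPoint θ (2 * cos θ * c - d) c n := by
  rw [orbitPoint, orbitPoint, sinComb_succ, sinComb_succ _ c d n]

theorem orbitPoint_le_orbitPoint (h : 0 < sinComb θ c d n) (h' : 0 < sinComb θ c' d' n)
    (hcd : c' * d ≤ c * d') : orbitPoint θ c d n ≤ orbitPoint θ c' d' n := by
  have hdet : (c' * d - c * d') * sin θ ^ 2 ≤ 0 :=
    mul_nonpos_of_nonpos_of_nonneg (sub_nonpos.2 hcd) (sq_nonneg _)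
  rw [← sinComb_casoratian θ c d c' d' n] at hdet
  rw [orbitPoint, orbitPoint, div_le_div_iff₀ h h']
  linarith

theorem orbitPoint_neg (h₀ : 0 < sinComb θ c d n) (h₁ : 0 < sinComb θ c d (n + 1)) :
    orbitPoint θ c d n < 0 :=
  div_neg_of_neg_of_pos (neg_neg_of_pos h₁) h₀

/-- The heights `H_m` of `Ω_α`, both parities in one formula, for `θ = π / q`. -/
noncomputable def height (θ : ℝ) (m : ℕ) : ℝ :=
  sin (m * θ / 2) / sin (m * θ / 2 + θ)

theorem height_two_mul (θ : ℝ) (n : ℕ) :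
    height θ (2 * n) = sin (n * θ) / sin ((n + 1) * θ) := by
  rw [height, show ((2 * n : ℕ) : ℝ) * θ / 2 = n * θ by push_cast; ring, add_one_mul]

theorem height_two_mul_add_one (h : cos (θ / 2) ≠ 0) (n : ℕ) :
    height θ (2 * n + 1) =
      (sin (n * θ) + sin ((n + 1) * θ)) / (sin ((n + 1) * θ) + sin ((n + 1 + 1) * θ)) := by
  have hsum (x : ℝ) :
      sin (x * θ) + sin ((x + 1) * θ) = sin (x * θ + θ / 2) * (2 * cos (θ / 2)) := by
    rw [add_comm, sin_add_sin, show ((x + 1) * θ + x * θ) / 2 = x * θ + θ / 2 by ring,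
      show ((x + 1) * θ - x * θ) / 2 = θ / 2 by ring]
    ring
  rw [hsum, hsum, mul_div_mul_right _ _ (mul_ne_zero two_ne_zero h), height]
  push_cast
  congr 2 <;> ring

theorem one_add_orbitPoint_mul {y : ℝ} (h : sinComb θ c d n ≠ 0) (hy : sin (y + θ) ≠ 0) :
    1 + orbitPoint θ c d n * (sin y / sin (y + θ)) =
      sin θ * (c * sin ((n + 1) * θ - y) - d * sin (n * θ - y)) /
        (sinComb θ c d n * sin (y + θ)) := by
  rw [orbitPoint, ← sinComb_mul_sin_add_sub]
  field_simp
  ring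

theorem one_add_orbitPoint_mul_height_two_mul_add_one (h : sinComb θ c d n ≠ 0)
    (hy : sin ((2 * n + 1 : ℕ) * θ / 2 + θ) ≠ 0) :
    1 + orbitPoint θ c d n * height θ (2 * n + 1) =
      (c + d) * sin (θ / 2) * sin θ / (sinComb θ c d n * sin ((2 * n + 1 : ℕ) * θ / 2 + θ)) := by
  rw [height, one_add_orbitPoint_mul h hy]
  congr 1
  push_cast
  rw [show (n + 1) * θ - (2 * n + 1) * θ / 2 = θ / 2 by ring,
    show n * θ - (2 * n + 1) * θ / 2 = -(θ / 2) by ring, sin_neg]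
  ring

theorem one_add_orbitPoint_mul_height_two_mul (h : sinComb θ c d n ≠ 0)
    (hy : sin ((2 * n : ℕ) * θ / 2 + θ) ≠ 0) :
    1 + orbitPoint θ c d n * height θ (2 * n) =
      c * sin θ ^ 2 / (sinComb θ c d n * sin ((2 * n : ℕ) * θ / 2 + θ)) := by
  rw [height, one_add_orbitPoint_mul h hy]
  congr 1
  push_cast
  rw [show (n + 1) * θ - 2 * n * θ / 2 = θ by ring, show n * θ - 2 * n * θ / 2 = 0 by ring,
    sin_zero]
  ring

theorem one_add_orbitPoint_mul_height_two_mul_add_two (h : sinComb θ c d n ≠ 0)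
    (hy : sin ((2 * n + 2 : ℕ) * θ / 2 + θ) ≠ 0) :
    1 + orbitPoint θ c d n * height θ (2 * n + 2) =
      d * sin θ ^ 2 / (sinComb θ c d n * sin ((2 * n + 2 : ℕ) * θ / 2 + θ)) := by
  rw [height, one_add_orbitPoint_mul h hy]
  congr 1
  push_cast
  rw [show (n + 1) * θ - (2 * n + 2) * θ / 2 = 0 by ring,
    show n * θ - (2 * n + 2) * θ / 2 = -θ by ring, sin_zero, sin_neg]
  ring

end Sine

section Region

/-- The parameters of `Ω_α` in terms of `θ = π / q`, `q = 2 * h + 3`, and `s = α * λ`: the condition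
`ρ < s ≤ 1`, where `ρ` is the positive root of `x ^ 2 + (2 - λ) * x = 1`. -/
structure IsAdmissible (h : ℕ) (θ s : ℝ) : Prop where
  angle : (2 * h + 3) * θ = π
  pos : 0 < s
  one_lt : 1 < s ^ 2 + (2 - 2 * cos θ) * s
  le_one : s ≤ 1

/-- The endpoints `φ_0 ≤ φ_1 ≤ ⋯ ≤ φ_{2h+2}` of the intervals `J_i = [φ_{i-1}, φ_i)`, that is,
`ℓ_0, r_1, ℓ_1, r_2, …, ℓ_h, r_{h+1}, r_0`. -/
noncomputable def node (θ s : ℝ) (h i : ℕ) : ℝ :=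
  if i = 2 * h + 2 then s
  else if Even i then orbitPoint θ 1 s (i / 2) else orbitPoint θ s 1 (i / 2)

variable {h n : ℕ} {θ s : ℝ}

theorem node_two_mul (θ s : ℝ) (hn : n ≤ h) : node θ s h (2 * n) = orbitPoint θ 1 s n := by
  rw [node, if_neg (by omega), if_pos (even_two_mul n), Nat.mul_div_cancel_left n two_pos]

theorem node_two_mul_add_one (θ s : ℝ) (h n : ℕ) :
    node θ s h (2 * n + 1) = orbitPoint θ s 1 n := by
  rw [node, if_neg (by omega), if_neg (Nat.not_even_two_mul_add_one n),
    show (2 * n + 1) / 2 = n by omega]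

theorem node_two_mul_add_two (θ s : ℝ) (h : ℕ) : node θ s h (2 * h + 2) = s := by
  rw [node, if_pos rfl]

namespace IsAdmissible

theorem angle_pos (A : IsAdmissible h θ s) : 0 < θ :=
  pos_of_mul_pos_right (A.angle ▸ pi_pos) (by positivity)

theorem succ_mul_angle_le (A : IsAdmissible h θ s) (hn : n ≤ h) : (n + 1) * θ ≤ π / 2 := by
  have : (n : ℝ) ≤ h := Nat.cast_le.2 hn
  nlinarith [A.angle, A.angle_pos]

theorem angle_lt (A : IsAdmissible h θ s) : θ < π / 2 := by
  nlinarith [A.angle, A.angle_pos, (Nat.cast_nonneg h : (0 : ℝ) ≤ h)]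

theorem sin_angle_pos (A : IsAdmissible h θ s) : 0 < sin θ :=
  sin_pos_of_pos_of_lt_pi A.angle_pos (by linarith [A.angle_lt, pi_pos])

theorem cos_angle_pos (A : IsAdmissible h θ s) : 0 < cos θ :=
  cos_pos_of_mem_Ioo ⟨by linarith [A.angle_pos, pi_pos], A.angle_lt⟩

theorem sin_half_angle_pos (A : IsAdmissible h θ s) : 0 < sin (θ / 2) :=
  sin_pos_of_pos_of_lt_pi (half_pos A.angle_pos) (by linarith [A.angle_lt, A.angle_pos])

theorem cos_half_angle_pos (A : IsAdmissible h θ s) : 0 < cos (θ / 2) :=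
  cos_pos_of_mem_Ioo ⟨by linarith [A.angle_pos, pi_pos], by linarith [A.angle_lt, A.angle_pos]⟩

theorem sin_succ_mul_angle (A : IsAdmissible h θ s) : sin ((h + 1) * θ) = cos (θ / 2) := by
  rw [← sin_pi_div_two_sub, ← A.angle]
  congr 1
  ring

theorem sin_succ_mul_angle_add_angle (A : IsAdmissible h θ s) :
    sin ((h + 1) * θ + θ) = cos (θ / 2) := by
  rw [← A.sin_succ_mul_angle, ← sin_pi_sub, ← A.angle]
  congr 1
  ring

theorem cos_lt (A : IsAdmissible h θ s) : cos θ < s := by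
  by_contra! hle
  have := mul_le_mul_of_nonneg_left hle A.pos.le
  linarith [A.one_lt, sq_nonneg (s - 1)]

theorem sinComb_left_pos (A : IsAdmissible h θ s) (hn : n ≤ h) : 0 < sinComb θ 1 s n := by
  have hcos : cos θ < 1 := A.cos_lt.trans_le A.le_one
  refine sinComb_pos A.angle_pos (A.succ_mul_angle_le hn) A.pos.le ?_
  exact (mul_lt_of_lt_one_right A.pos hcos).trans_le A.le_one

theorem sinComb_right_pos (A : IsAdmissible h θ s) (hn : n ≤ h) : 0 < sinComb θ s 1 n :=
  sinComb_pos A.angle_pos (A.succ_mul_angle_le hn) zero_le_one (by simpa using A.cos_lt)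

theorem orbitPoint_left_le_right (A : IsAdmissible h θ s) (hn : n ≤ h) :
    orbitPoint θ 1 s n ≤ orbitPoint θ s 1 n :=
  orbitPoint_le_orbitPoint (A.sinComb_left_pos hn) (A.sinComb_right_pos hn)
    (mul_le_mul A.le_one A.le_one A.pos.le zero_le_one)

theorem orbitPoint_right_le_left_succ (A : IsAdmissible h θ s) (hn : n < h) :
    orbitPoint θ s 1 n ≤ orbitPoint θ 1 s (n + 1) := by
  have hpos := A.sinComb_left_pos (Nat.succ_le_of_lt hn)
  rw [sinComb_succ] at hpos
  rw [orbitPoint_succ]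
  exact orbitPoint_le_orbitPoint (A.sinComb_right_pos hn.le) hpos (by linarith [A.cos_lt])

theorem orbitPoint_right_lt (A : IsAdmissible h θ s) (hn : n ≤ h) : orbitPoint θ s 1 n < s := by
  rcases hn.lt_or_eq with hlt | rfl
  · exact (orbitPoint_neg (A.sinComb_right_pos hn) (A.sinComb_right_pos hlt)).trans A.pos
  · have hsum : sin ((n + 1) * θ + θ) + sin (n * θ) = 2 * cos θ * sin ((n + 1) * θ) := by
      rw [show n * θ = (n + 1) * θ - θ by ring]
      linarith [two_mul_sin_mul_cos ((n + 1) * θ) θ]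
    rw [A.sin_succ_mul_angle_add_angle, A.sin_succ_mul_angle] at hsum
    have hnum : sinComb θ s 1 (n + 1) = (s - 1) * cos (θ / 2) := by
      rw [sinComb, Nat.cast_add_one, add_one_mul (n + 1 : ℝ), A.sin_succ_mul_angle_add_angle,
        A.sin_succ_mul_angle]
      ring
    have hden : sinComb θ s 1 n = (s + 1 - 2 * cos θ) * cos (θ / 2) := by
      rw [sinComb, A.sin_succ_mul_angle]
      linear_combination -hsum
    rw [orbitPoint, div_lt_iff₀ (A.sinComb_right_pos hn), hnum, hden]
    nlinarith [mul_pos (sub_pos.2 A.one_lt) A.cos_half_angle_pos]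

theorem node_le_node_succ (A : IsAdmissible h θ s) {i : ℕ} (hi : i < 2 * h + 2) :
    node θ s h i ≤ node θ s h (i + 1) := by
  obtain ⟨n, rfl | rfl⟩ := i.even_or_odd'
  · rw [node_two_mul θ s (by omega), node_two_mul_add_one]
    exact A.orbitPoint_left_le_right (by omega)
  · rw [node_two_mul_add_one]
    rcases (show n ≤ h by omega).lt_or_eq with hn | rfl
    · exact (A.orbitPoint_right_le_left_succ hn).trans_eq (node_two_mul θ s hn).symm
    · exact (A.orbitPoint_right_lt le_rfl).le.trans_eq (node_two_mul_add_two θ s n).symm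

theorem sin_half_mul_angle_add_angle_pos (A : IsAdmissible h θ s) {m : ℕ} (hm : m ≤ 2 * h + 2) :
    0 < sin (m * θ / 2 + θ) := by
  have hm' : (m : ℝ) ≤ 2 * h + 2 := by exact_mod_cast hm
  have hθ := A.angle_pos
  refine sin_pos_of_pos_of_lt_pi (by positivity) ?_
  rw [← A.angle]
  nlinarith [(Nat.cast_nonneg h : (0 : ℝ) ≤ h)]

theorem height_nonneg (A : IsAdmissible h θ s) {m : ℕ} (hm : m ≤ 2 * h + 2) :
    0 ≤ height θ m := by
  have hm' : (m : ℝ) ≤ 2 * h + 2 := by exact_mod_cast hm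
  have hθ := A.angle_pos
  refine div_nonneg (sin_nonneg_of_nonneg_of_le_pi (by positivity) ?_)
    (A.sin_half_mul_angle_add_angle_pos hm).le
  rw [← A.angle]
  nlinarith [(Nat.cast_nonneg h : (0 : ℝ) ≤ h)]

theorem height_last (A : IsAdmissible h θ s) : height θ (2 * h + 2) = 1 := by
  have hhalf : ((2 * h + 2 : ℕ) : ℝ) * θ / 2 = (h + 1) * θ := by push_cast; ring
  rw [height, hhalf, A.sin_succ_mul_angle_add_angle, A.sin_succ_mul_angle,
    div_self A.cos_half_angle_pos.ne']

theorem one_add_node_mul_height_pos (A : IsAdmissible h θ s) {i : ℕ} (hi : i < 2 * h + 2) :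
    0 < 1 + node θ s h i * height θ (i + 1) := by
  have hdenom := A.sin_half_mul_angle_add_angle_pos hi
  have hs := A.pos
  have hsin := A.sin_angle_pos
  obtain ⟨n, rfl | rfl⟩ := i.even_or_odd'
  · have hf := A.sinComb_left_pos (show n ≤ h by omega)
    have hhalf := A.sin_half_angle_pos
    rw [node_two_mul θ s (by omega),
      one_add_orbitPoint_mul_height_two_mul_add_one hf.ne' hdenom.ne']
    positivity
  · have hf := A.sinComb_right_pos (show n ≤ h by omega)
    rw [node_two_mul_add_one, one_add_orbitPoint_mul_height_two_mul_add_two hf.ne' hdenom.ne']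
    positivity

theorem box_ratio_two_mul (A : IsAdmissible h θ s) (hn : n ≤ h) :
    (1 + node θ s h (2 * n + 1) * height θ (2 * n + 1)) /
        (1 + node θ s h (2 * n) * height θ (2 * n + 1)) =
      sinComb θ 1 s n / sinComb θ s 1 n := by
  have hleft := (A.sinComb_left_pos hn).ne'
  have hright := (A.sinComb_right_pos hn).ne'
  have hdenom := (A.sin_half_mul_angle_add_angle_pos (show 2 * n + 1 ≤ 2 * h + 2 by omega)).ne'
  have hsin := A.sin_angle_pos.ne'
  have hhalf := A.sin_half_angle_pos.ne'
  have hs : 1 + s ≠ 0 := by linarith [A.pos]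
  rw [node_two_mul θ s hn, node_two_mul_add_one,
    one_add_orbitPoint_mul_height_two_mul_add_one hleft hdenom,
    one_add_orbitPoint_mul_height_two_mul_add_one hright hdenom, add_comm s]
  generalize sin ((2 * n + 1 : ℕ) * θ / 2 + θ) = D at hdenom ⊢
  field_simp

theorem box_ratio_two_mul_add_one (A : IsAdmissible h θ s) (hn : n < h) :
    (1 + node θ s h (2 * n + 2) * height θ (2 * n + 2)) /
        (1 + node θ s h (2 * n + 1) * height θ (2 * n + 2)) =
      sinComb θ s 1 n / sinComb θ 1 s (n + 1) := by
  have hleft := (A.sinComb_left_pos (show n + 1 ≤ h from hn)).ne'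
  have hright := (A.sinComb_right_pos hn.le).ne'
  have hdenom := (A.sin_half_mul_angle_add_angle_pos (show 2 * n + 2 ≤ 2 * h + 2 by omega)).ne'
  have hsin := A.sin_angle_pos.ne'
  rw [node_two_mul_add_one, one_add_orbitPoint_mul_height_two_mul_add_two hright hdenom,
    ← mul_add_one 2 n, node_two_mul θ s (show n + 1 ≤ h from hn),
    one_add_orbitPoint_mul_height_two_mul hleft hdenom]
  generalize sin ((2 * (n + 1) : ℕ) * θ / 2 + θ) = D at hdenom ⊢
  field_simp

theorem box_ratio_last (A : IsAdmissible h θ s) :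
    (1 + node θ s h (2 * h + 2) * height θ (2 * h + 2)) /
        (1 + node θ s h (2 * h + 1) * height θ (2 * h + 2)) =
      (1 + s) / (2 * sin (θ / 2)) * (sinComb θ s 1 h / sinComb θ 1 s 0) := by
  have hright := (A.sinComb_right_pos le_rfl).ne'
  have hdenom := (A.sin_half_mul_angle_add_angle_pos le_rfl).ne'
  have hsin := A.sin_half_angle_pos.ne'
  have hcos := A.cos_half_angle_pos.ne'
  have hdouble : sin θ = 2 * sin (θ / 2) * cos (θ / 2) := by
    rw [← sin_two_mul, mul_div_cancel₀ θ two_ne_zero]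
  have hhalf : ((2 * h + 2 : ℕ) : ℝ) * θ / 2 + θ = (h + 1) * θ + θ := by push_cast; ring
  rw [node_two_mul_add_one, one_add_orbitPoint_mul_height_two_mul_add_two hright hdenom,
    A.height_last, node_two_mul_add_two, hhalf, A.sin_succ_mul_angle_add_angle, sinComb_zero,
    hdouble]
  field_simp

theorem sum_log_box_ratio (A : IsAdmissible h θ s) {k : ℕ} (hk : k ≤ h) :
    ∑ i ∈ Finset.range (2 * k), log ((1 + node θ s h (i + 1) * height θ (i + 1)) /
        (1 + node θ s h i * height θ (i + 1))) =
      log (sinComb θ 1 s 0) - log (sinComb θ 1 s k) := by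
  induction k with
  | zero => simp
  | succ k ih =>
    have hleft := (A.sinComb_left_pos (show k ≤ h by omega)).ne'
    have hleft' := (A.sinComb_left_pos hk).ne'
    have hright := (A.sinComb_right_pos (show k ≤ h by omega)).ne'
    rw [mul_add_one, Finset.sum_range_succ, Finset.sum_range_succ, ih (by omega),
      A.box_ratio_two_mul (by omega), A.box_ratio_two_mul_add_one hk, log_div hleft hright,
      log_div hright hleft']
    ring

theorem setIntegral_staircase (A : IsAdmissible h θ s) :
    ∫ z in staircase (node θ s h) (height θ) (2 * h + 2), 1 / (1 + z.1 * z.2) ^ 2 =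
      log ((1 + s) / (2 * sin (θ / 2))) := by
  have hleft := (A.sinComb_left_pos le_rfl).ne'
  have hleft₀ := (A.sinComb_left_pos (Nat.zero_le h)).ne'
  have hright := (A.sinComb_right_pos le_rfl).ne'
  have hval : (1 + s) / (2 * sin (θ / 2)) ≠ 0 :=
    div_ne_zero (by linarith [A.pos]) (mul_ne_zero two_ne_zero A.sin_half_angle_pos.ne')
  rw [Rosen.setIntegral_staircase (fun i ↦ A.node_le_node_succ) (fun i ↦ A.height_nonneg)
      (fun i ↦ A.one_add_node_mul_height_pos), Finset.sum_range_succ, Finset.sum_range_succ,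
    A.sum_log_box_ratio le_rfl, A.box_ratio_two_mul le_rfl, A.box_ratio_last,
    log_mul hval (div_ne_zero hright hleft₀), log_div hleft hright, log_div hright hleft₀]
  ring

end IsAdmissible

end Region

section Orbits

variable {h n : ℕ} {α θ s : ℝ}

namespace IsAdmissible

theorem orbitPoint_left_zero (A : IsAdmissible h θ s) : orbitPoint θ 1 s 0 = s - 2 * cos θ := by
  rw [orbitPoint_zero A.sin_angle_pos.ne' one_ne_zero, div_one]

theorem orbitPoint_right_zero (A : IsAdmissible h θ s) : orbitPoint θ s 1 0 = 1 / s - 2 * cos θ :=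
  orbitPoint_zero A.sin_angle_pos.ne' A.pos.ne'

theorem iterate_Tmap_left (A : IsAdmissible h θ (α * (2 * cos θ))) (hn : n ≤ h) :
    (Tmap (2 * cos θ) α)^[n] ((α - 1) * (2 * cos θ)) = orbitPoint θ 1 (α * (2 * cos θ)) n := by
  have hpos := fun n (hn : n ≤ h) ↦ A.sinComb_left_pos hn
  have h₀ : (α - 1) * (2 * cos θ) = orbitPoint θ 1 (α * (2 * cos θ)) 0 := by
    rw [A.orbitPoint_left_zero]
    ring
  rw [h₀]
  exact iterate_Tmap_of_neg (by linarith [A.cos_angle_pos]) (by linarith [cos_le_one θ])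
    (fun n hn ↦ orbitPoint_succ_eq_neg_one_div_sub (hpos (n + 1) hn).ne')
    (fun n hn ↦ orbitPoint_neg (hpos n hn.le) (hpos (n + 1) hn)) h₀.le
    (fun n hn ↦ (A.orbitPoint_left_le_right hn).trans_lt (A.orbitPoint_right_lt hn)) n hn

theorem Tmap_right_zero (A : IsAdmissible h θ (α * (2 * cos θ))) :
    Tmap (2 * cos θ) α (α * (2 * cos θ)) = orbitPoint θ (α * (2 * cos θ)) 1 0 := by
  have hlt := A.orbitPoint_right_lt (Nat.zero_le h)
  have hs : α * (2 * cos θ) ≤ 1 / (α * (2 * cos θ)) :=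
    A.le_one.trans (one_le_one_div A.pos A.le_one)
  have habs : |1 / (α * (2 * cos θ))| = 1 / (α * (2 * cos θ)) := abs_of_pos (one_div_pos.2 A.pos)
  rw [A.orbitPoint_right_zero] at hlt ⊢
  rw [Tmap_eq_abs_sub (by linarith [A.cos_angle_pos]) A.pos.ne'] <;> rw [habs]
  · exact hs
  · linarith

theorem iterate_Tmap_right (A : IsAdmissible h θ (α * (2 * cos θ))) (hn : n ≤ h) :
    (Tmap (2 * cos θ) α)^[n + 1] (α * (2 * cos θ)) = orbitPoint θ (α * (2 * cos θ)) 1 n := by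
  have hpos := fun n (hn : n ≤ h) ↦ A.sinComb_right_pos hn
  have h₀ : (α - 1) * (2 * cos θ) ≤ orbitPoint θ (α * (2 * cos θ)) 1 0 := by
    have := A.orbitPoint_left_le_right (Nat.zero_le h)
    rw [A.orbitPoint_left_zero] at this
    linarith
  rw [Function.iterate_succ_apply, A.Tmap_right_zero]
  exact iterate_Tmap_of_neg (by linarith [A.cos_angle_pos]) (by linarith [cos_le_one θ])
    (fun n hn ↦ orbitPoint_succ_eq_neg_one_div_sub (hpos (n + 1) hn).ne')
    (fun n hn ↦ orbitPoint_neg (hpos n hn.le) (hpos (n + 1) hn)) h₀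
    (fun n hn ↦ A.orbitPoint_right_lt hn) n hn

theorem of_rho_div_lt (hθ : (2 * h + 3) * θ = π)
    (hρ : (2 * cos θ - 2 + √((2 * cos θ) ^ 2 - 4 * (2 * cos θ) + 8)) / 2 / (2 * cos θ) < α)
    (hα : α ≤ 1 / (2 * cos θ)) : IsAdmissible h θ (α * (2 * cos θ)) := by
  have hθ₀ : 0 < θ := pos_of_mul_pos_right (hθ ▸ pi_pos) (by positivity)
  have hθ₁ : θ < π / 2 := by nlinarith [(Nat.cast_nonneg h : (0 : ℝ) ≤ h)]
  have hcos : 0 < 2 * cos θ := mul_pos two_pos (cos_pos_of_mem_Ioo ⟨by linarith, hθ₁⟩)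
  rw [div_lt_iff₀ hcos] at hρ
  rw [le_div_iff₀ hcos] at hα
  have hlt : √((2 * cos θ) ^ 2 - 4 * (2 * cos θ) + 8) < 2 * (α * (2 * cos θ)) + 2 - 2 * cos θ := by
    linarith
  have hgt : 2 - 2 * cos θ < √((2 * cos θ) ^ 2 - 4 * (2 * cos θ) + 8) :=
    lt_sqrt_of_sq_lt (by linarith)
  exact ⟨hθ, by linarith, by linarith [lt_sq_of_sqrt_lt hlt], hα⟩

theorem sqrt_two_sub (A : IsAdmissible h θ s) : √(2 - 2 * cos θ) = 2 * sin (θ / 2) := by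
  rw [sin_half_eq_sqrt A.angle_pos.le (by linarith [A.angle_lt, pi_pos]),
    show 2 - 2 * cos θ = 2 ^ 2 * ((1 - cos θ) / 2) by ring,
    sqrt_mul (by norm_num), sqrt_sq zero_le_two]

end IsAdmissible

theorem staircase_node_height {ℓ r Hodd Heven : ℕ → ℝ}
    (hℓ : ∀ n ≤ h, ℓ n = orbitPoint θ 1 s n) (hr₀ : r 0 = s)
    (hr : ∀ n ≤ h, r (n + 1) = orbitPoint θ s 1 n)
    (hodd : ∀ n, Hodd (n + 1) = height θ (2 * n + 1)) (heven : ∀ n, Heven n = height θ (2 * n)) :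
    staircase (node θ s h) (height θ) (2 * h + 2) =
      (⋃ n ∈ Finset.Icc 1 h, Ico (ℓ (n - 1)) (r n) ×ˢ Icc (0 : ℝ) (Hodd n))
      ∪ (⋃ n ∈ Finset.Icc 1 h, Ico (r n) (ℓ n) ×ˢ Icc (0 : ℝ) (Heven n))
      ∪ Ico (ℓ h) (r (h + 1)) ×ˢ Icc (0 : ℝ) (Hodd (h + 1))
      ∪ Ico (r (h + 1)) (r 0) ×ˢ Icc (0 : ℝ) (Heven (h + 1)) := by
  rw [staircase_succ, staircase_succ, staircase_two_mul, node_two_mul θ s le_rfl,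
    node_two_mul_add_one, node_two_mul_add_two, hℓ h le_rfl, hr h le_rfl, hr₀, hodd, heven,
    mul_add_one]
  congr 3
  all_goals
    refine iUnion₂_congr fun n hn ↦ ?_
    obtain ⟨k, rfl⟩ := Nat.exists_eq_add_of_le' (Finset.mem_Icc.1 hn).1
    have hk : k + 1 ≤ h := (Finset.mem_Icc.1 hn).2
    rw [Nat.add_sub_cancel, node_two_mul_add_one, hr k (by omega)]
  · rw [node_two_mul θ s (by omega), hℓ k (by omega), hodd]
    rfl
  · rw [node_two_mul θ s hk, hℓ (k + 1) hk, heven]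

end Orbits

end Rosen

open Rosen in
/-- The case `h = 0` is that of Nakada's `α`-continued fractions: `λ = 1` and `ρ = (√5 - 1) / 2`. -/
theorem stmt12_general (h q : ℕ) (hq : q = 2 * h + 3) (lam α ρ : ℝ)
    (hlam : lam = 2 * Real.cos (Real.pi / q))
    (hρ : ρ = (lam - 2 + Real.sqrt (lam ^ 2 - 4 * lam + 8)) / 2)
    (hα1 : ρ / lam < α) (hα2 : α ≤ 1 / lam)
    (ℓ r : ℕ → ℝ)
    (hℓ : ∀ n, ℓ n = (Tmap lam α)^[n] ((α - 1) * lam))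
    (hr : ∀ n, r n = (Tmap lam α)^[n] (α * lam))
    (Hodd Heven : ℕ → ℝ)
    (hHodd : ∀ n : ℕ, Hodd n =
      (Real.sin (((n : ℝ) - 1) * Real.pi / q) + Real.sin (n * Real.pi / q))
        / (Real.sin (n * Real.pi / q) + Real.sin (((n : ℝ) + 1) * Real.pi / q)))
    (hHeven : ∀ n : ℕ, Heven n =
      Real.sin (n * Real.pi / q) / Real.sin (((n : ℝ) + 1) * Real.pi / q))
    (Ω : Set (ℝ × ℝ))
    (hΩ : Ω = (⋃ n ∈ Finset.Icc 1 h, Ico (ℓ (n - 1)) (r n) ×ˢ Icc (0 : ℝ) (Hodd n))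
      ∪ (⋃ n ∈ Finset.Icc 1 h, Ico (r n) (ℓ n) ×ˢ Icc (0 : ℝ) (Heven n))
      ∪ Ico (ℓ h) (r (h + 1)) ×ˢ Icc (0 : ℝ) (Hodd (h + 1))
      ∪ Ico (r (h + 1)) (r 0) ×ˢ Icc (0 : ℝ) (Heven (h + 1))) :
    (∫ z in Ω, 1 / (1 + z.1 * z.2) ^ 2
      = Real.log ((1 + α * lam) / Real.sqrt (2 - lam))) ∧
    (∫ z in Ω, 1 / (1 + z.1 * z.2) ^ 2
      = Real.log ((1 + 2 * α * Real.cos (Real.pi / q)) / (2 * Real.sin (Real.pi / (2 * q))))) := by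
  obtain ⟨θ, hθ⟩ : ∃ θ, θ = Real.pi / q := ⟨_, rfl⟩
  have hangle : (2 * h + 3) * θ = Real.pi := by
    rw [hθ, hq]
    push_cast
    field_simp
  simp only [mul_div_assoc, ← hθ] at hlam hHodd hHeven ⊢
  subst hlam hρ
  have A : IsAdmissible h θ (α * (2 * Real.cos θ)) := .of_rho_div_lt hangle hα1 hα2
  have hodd (n : ℕ) : Hodd (n + 1) = height θ (2 * n + 1) := by
    rw [hHodd, height_two_mul_add_one A.cos_half_angle_pos.ne', Nat.cast_add_one,
      add_sub_cancel_right]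
  have heven (n : ℕ) : Heven n = height θ (2 * n) := by rw [hHeven, height_two_mul]
  have hleft (n : ℕ) (hn : n ≤ h) := (hℓ n).trans (A.iterate_Tmap_left hn)
  have hright (n : ℕ) (hn : n ≤ h) := (hr (n + 1)).trans (A.iterate_Tmap_right hn)
  have hint := A.setIntegral_staircase
  rw [staircase_node_height hleft (hr 0) hright hodd heven, ← hΩ] at hint
  refine ⟨hint.trans (by rw [A.sqrt_two_sub]), hint.trans ?_⟩
  rw [show Real.pi / (2 * q) = θ / 2 by rw [hθ, div_div, mul_comm], mul_left_comm, mul_assoc]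

/-- Proposition 2.11: for odd `q = 2h+3` and `ρ/λ < α ≤ 1/λ`, the integral of `(1+xy)⁻²`
over `Ω_α` equals `log((1+αλ)/√(2-λ)) = log((1+2α cos(π/q))/(2 sin(π/(2q))))`. -/
theorem stmt12 (h q : ℕ) (hh : 1 ≤ h) (hq : q = 2 * h + 3) (lam α ρ : ℝ)
    (hlam : lam = 2 * Real.cos (Real.pi / q))
    (hρ : ρ = (lam - 2 + Real.sqrt (lam ^ 2 - 4 * lam + 8)) / 2)
    (hα1 : ρ / lam < α) (hα2 : α ≤ 1 / lam)
    (ℓ r : ℕ → ℝ)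
    (hℓ : ∀ n, ℓ n = (Tmap lam α)^[n] ((α - 1) * lam))
    (hr : ∀ n, r n = (Tmap lam α)^[n] (α * lam))
    (Hodd Heven : ℕ → ℝ)
    (hHodd : ∀ n : ℕ, Hodd n =
      (Real.sin (((n : ℝ) - 1) * Real.pi / q) + Real.sin (n * Real.pi / q))
        / (Real.sin (n * Real.pi / q) + Real.sin (((n : ℝ) + 1) * Real.pi / q)))
    (hHeven : ∀ n : ℕ, Heven n =
      Real.sin (n * Real.pi / q) / Real.sin (((n : ℝ) + 1) * Real.pi / q))
    (Ω : Set (ℝ × ℝ))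
    (hΩ : Ω = (⋃ n ∈ Finset.Icc 1 h, Ico (ℓ (n - 1)) (r n) ×ˢ Icc (0 : ℝ) (Hodd n))
      ∪ (⋃ n ∈ Finset.Icc 1 h, Ico (r n) (ℓ n) ×ˢ Icc (0 : ℝ) (Heven n))
      ∪ Ico (ℓ h) (r (h + 1)) ×ˢ Icc (0 : ℝ) (Hodd (h + 1))
      ∪ Ico (r (h + 1)) (r 0) ×ˢ Icc (0 : ℝ) (Heven (h + 1))) :
    (∫ z in Ω, 1 / (1 + z.1 * z.2) ^ 2
        = Real.log ((1 + α * lam) / Real.sqrt (2 - lam))) ∧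
    (∫ z in Ω, 1 / (1 + z.1 * z.2) ^ 2
        = Real.log ((1 + 2 * α * Real.cos (Real.pi / q)) / (2 * Real.sin (Real.pi / (2 * q))))) :=
  stmt12_general h q hq lam α ρ hlam hρ hα1 hα2 ℓ r hℓ hr Hodd Heven hHodd hHeven Ω hΩ
end
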